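/- arXiv:1006.0673 — 7 statements merged into one kernel-verified Lean document; each statement's English description precedes it below -/
import Mathlib

section
/- Let G = (S, A₁, A₂, δ, obs₁, obs₂) be a concurrent game of partial observation, let φ ⊆ S^ω be a measurable objective, and let (Ḡ, φ̄) be the interaction-separation reduction of (G, φ). Then for every state s ∈ S: player 1 has an observation-based almost-sure winning strategy for φ from s in G if and only if player 1 has an observation-based almost-sure winning strategy for φ̄ from s in Ḡ; and player 1 has an observation-based positive winning strategy for φ from s in G if and only if player 1 has an observation-based positive winning strategy for φ̄ from s in Ḡ. -/
open MeasureTheory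
open scoped ENNReal

namespace Stmt0

variable {S A₁ A₂ O₁ O₂ : Type}

/-- The cylinder set of infinite plays extending the finite prefix `l`. -/
def Cyl (l : List S) : Set (ℕ → S) := {ρ | ∀ i : Fin l.length, ρ i.1 = l.get i}

/-- Probability of observing the successive states `rest` after the history `hist ++ [cur]`,
when the players draw their actions independently according to `σ` and `π`, and successor
states are drawn according to `δ`. -/
noncomputable def listProb [Fintype A₁] [Fintype A₂] (δ : S → A₁ → A₂ → PMF S)
    (σ : List S → PMF A₁) (π : List S → PMF A₂) :
    List S → S → List S → ℝ≥0∞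
  | _, _, [] => 1
  | hist, cur, s' :: rest =>
      (∑' a, ∑' b, σ (hist ++ [cur]) a * π (hist ++ [cur]) b * δ cur a b s') *
        listProb δ σ π (hist ++ [cur]) s' rest

/-- `Pr` is the family of Ionescu–Tulcea play measures of the concurrent game `δ`:
`Pr s σ π` is a probability measure on `S^ω` (product σ-algebra, `S` discrete) and the
probability of each cylinder is the product of one-step transition probabilities. -/
def IsPlayMeasure [Fintype A₁] [Fintype A₂] [MeasurableSpace S] (δ : S → A₁ → A₂ → PMF S)
    (Pr : S → (List S → PMF A₁) → (List S → PMF A₂) → Measure (ℕ → S)) : Prop :=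
  (∀ s σ π, IsProbabilityMeasure (Pr s σ π)) ∧
    ∀ s σ π (l : List S), Pr s σ π (Cyl (s :: l)) = listProb δ σ π [] s l

/-- An observation-based strategy only depends on the observation sequence. -/
def ObsBased {A O : Type} (obs : S → O) (σ : List S → PMF A) : Prop :=
  ∀ h h' : List S, h.map obs = h'.map obs → σ h = σ h'

/-- The state space of the interaction-separation reduction: `S ⊔ (S × A₁ × A₂)`. -/
abbrev BarS (S A₁ A₂ : Type) : Type := S ⊕ S × A₁ × A₂

/-- Transition function of the interaction-separation reduction: from `s ∈ S` the action
pair `(a₁, a₂)` leads deterministically to `(s, a₁, a₂)`, and from `(s, a₁, a₂)`, for every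
action pair, the successor is drawn in `S` according to `δ s a₁ a₂`. -/
noncomputable def barδ (δ : S → A₁ → A₂ → PMF S) :
    BarS S A₁ A₂ → A₁ → A₂ → PMF (BarS S A₁ A₂)
  | Sum.inl s, a₁, a₂ => PMF.pure (Sum.inr (s, a₁, a₂))
  | Sum.inr (s, a₁, a₂), _, _ => (δ s a₁ a₂).map Sum.inl

/-- Observations in the reduced game: `(s, a₁, a₂)` is observed like `s`. -/
def barObs {O : Type} (obs : S → O) : BarS S A₁ A₂ → O
  | Sum.inl s => obs s
  | Sum.inr (s, _, _) => obs s

/-- Projection of reduced states to original states. -/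
def unbar : BarS S A₁ A₂ → S
  | Sum.inl s => s
  | Sum.inr (s, _, _) => s

/-- The reduced objective `φ̄`: plays alternating between `S` (at even positions) and
`S × A₁ × A₂` (at odd positions) whose even subsequence belongs to `φ`. -/
def barφ (φ : Set (ℕ → S)) : Set (ℕ → BarS S A₁ A₂) :=
  {ρ | (∀ n, ∃ s, ρ (2 * n) = Sum.inl s) ∧ (∀ n, ∃ p, ρ (2 * n + 1) = Sum.inr p) ∧
    (fun n => unbar (ρ (2 * n))) ∈ φ}

/- HELPERS -/
section Helpers

/-- One-step transition weight. -/
noncomputable def stepW [Fintype A₁] [Fintype A₂] (δ : S → A₁ → A₂ → PMF S)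
    (σ : List S → PMF A₁) (π : List S → PMF A₂) (h : List S) (c t : S) : ℝ≥0∞ :=
  ∑' a, ∑' b, σ h a * π h b * δ c a b t

theorem listProb_cons [Fintype A₁] [Fintype A₂] (δ : S → A₁ → A₂ → PMF S)
    (σ : List S → PMF A₁) (π : List S → PMF A₂) (hist : List S) (c t : S) (l : List S) :
    listProb δ σ π hist c (t :: l) =
      stepW δ σ π (hist ++ [c]) c t * listProb δ σ π (hist ++ [c]) t l := rfl

theorem listProb_nil [Fintype A₁] [Fintype A₂] (δ : S → A₁ → A₂ → PMF S)
    (σ : List S → PMF A₁) (π : List S → PMF A₂) (hist : List S) (c : S) :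
    listProb δ σ π hist c [] = 1 := rfl

theorem listProb_snoc [Fintype A₁] [Fintype A₂] (δ : S → A₁ → A₂ → PMF S)
    (σ : List S → PMF A₁) (π : List S → PMF A₂) (l : List S) (x t : S) :
    ∀ (hist : List S) (c : S), listProb δ σ π hist c (l ++ [x, t]) =
      listProb δ σ π hist c (l ++ [x]) * stepW δ σ π (hist ++ c :: (l ++ [x])) x t := by
  induction l with
  | nil =>
    intro hist c
    simp [listProb_cons, listProb_nil]
  | cons d l ih =>
    intro hist c
    simp only [List.cons_append, listProb_cons, ih, mul_assoc]
    simp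

theorem mem_Cyl {l : List S} {ρ : ℕ → S} :
    ρ ∈ Cyl l ↔ ∀ i (hi : i < l.length), ρ i = l[i] := by
  simp [Cyl, Fin.forall_iff]

theorem mem_Cyl_append {l : List S} {x : S} {ρ : ℕ → S} :
    ρ ∈ Cyl (l ++ [x]) ↔ ρ ∈ Cyl l ∧ ρ l.length = x := by
  simp only [mem_Cyl]
  constructor
  · intro h
    refine ⟨fun i hi => ?_, ?_⟩
    · rw [h i (by simp; omega), List.getElem_append_left]
    · rw [h l.length (by simp)]; simp
  · rintro ⟨h1, h2⟩ i hi
    rcases Nat.lt_or_ge i l.length with h | h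
    · rw [List.getElem_append_left h]; exact h1 i h
    · have : i = l.length := by simp at hi; omega
      subst this; simp [h2]

theorem mem_Cyl_ofFn (ρ : ℕ → S) (n : ℕ) : ρ ∈ Cyl (List.ofFn (fun i : Fin n => ρ i)) := by
  simp [mem_Cyl]

theorem measurableSet_Cyl [MeasurableSpace S] [DiscreteMeasurableSpace S] (l : List S) :
    MeasurableSet (Cyl l) := by
  have : Cyl l = ⋂ i : Fin l.length, (fun ρ : ℕ → S => ρ i.1) ⁻¹' {l.get i} := by
    ext ρ; simp [Cyl]
  rw [this]
  exact MeasurableSet.iInter fun i => measurable_pi_apply _ (MeasurableSet.of_discrete)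

theorem measure_ext_Cyl [Countable S] [MeasurableSpace S] [DiscreteMeasurableSpace S]
    (μ ν : Measure (ℕ → S)) [IsProbabilityMeasure μ] [IsProbabilityMeasure ν]
    (h : ∀ l, μ (Cyl l) = ν (Cyl l)) : μ = ν := by
  have hgen : (MeasurableSpace.pi : MeasurableSpace (ℕ → S)) =
      MeasurableSpace.generateFrom (insert ∅ (Set.range Cyl)) := by
    apply le_antisymm
    · refine iSup_le fun n => ?_
      rintro _ ⟨B, -, rfl⟩
      have : (fun ρ : ℕ → S => ρ n) ⁻¹' B =
          ⋃ l ∈ {l : List S | ∃ x ∈ B, ∃ l', l'.length = n ∧ l = l' ++ [x]}, Cyl l := by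
        ext ρ
        simp only [Set.mem_preimage, Set.mem_iUnion, Set.mem_ofPred_eq, exists_prop]
        constructor
        · intro hx
          refine ⟨_, ⟨ρ n, hx, List.ofFn (fun i : Fin n => ρ i), by simp, rfl⟩, ?_⟩
          rw [mem_Cyl_append]
          exact ⟨mem_Cyl_ofFn ρ n, by simp⟩
        · rintro ⟨_, ⟨x, hx, l', rfl, rfl⟩, hm⟩
          rw [mem_Cyl_append] at hm
          rw [hm.2]; exact hx
      rw [this]
      refine MeasurableSet.biUnion (Set.to_countable _) fun l _ => ?_
      exact MeasurableSpace.measurableSet_generateFrom (Or.inr ⟨l, rfl⟩)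
    · apply MeasurableSpace.generateFrom_le
      rintro _ (rfl | ⟨l, rfl⟩)
      · exact MeasurableSet.empty
      · exact measurableSet_Cyl l
  refine ext_of_generate_finite _ hgen ?_ ?_ (by simp)
  · rintro _ (rfl | ⟨l, rfl⟩) _ (rfl | ⟨l', rfl⟩) hne
    · simp
    · simp
    · simp
    · right
      obtain ⟨ρ, h1, h2⟩ := hne
      rcases le_total l.length l'.length with hl | hl
      · refine ⟨l', ?_⟩
        refine (Set.inter_eq_right.2 fun τ hτ => ?_).symm
        rw [mem_Cyl] at *
        intro i hi
        rw [hτ i (by omega), ← h1 i hi, h2 i (by omega)]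
      · refine ⟨l, ?_⟩
        refine (Set.inter_eq_left.2 fun τ hτ => ?_).symm
        rw [mem_Cyl] at *
        intro i hi
        rw [hτ i (by omega), ← h2 i hi, h1 i (by omega)]
  · rintro _ (rfl | ⟨l, rfl⟩)
    · simp
    · exact h l

section PlayMeasure
variable [Fintype A₁] [Fintype A₂] [MeasurableSpace S] [DiscreteMeasurableSpace S]
  {δ : S → A₁ → A₂ → PMF S}
  {Pr : S → (List S → PMF A₁) → (List S → PMF A₂) → Measure (ℕ → S)}

theorem pm_start (hPr : IsPlayMeasure δ Pr) (s : S) (σ π) : ∀ᵐ ρ ∂(Pr s σ π), ρ 0 = s := by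
  have := hPr.1 s σ π
  have h := hPr.2 s σ π []
  rw [listProb_nil] at h
  have := (prob_compl_eq_zero_iff (measurableSet_Cyl [s])).2 h
  rw [ae_iff]
  convert this using 2
  ext ρ
  simp [mem_Cyl]

theorem pm_zero (hPr : IsPlayMeasure δ Pr) (s c : S) (hc : c ≠ s) (σ π) (l : List S) :
    Pr s σ π (Cyl (c :: l)) = 0 := by
  refine measure_mono_null (fun ρ hρ => ?_) (ae_iff.1 (pm_start hPr s σ π))
  have := mem_Cyl.1 hρ 0 (by simp)
  simp only [Set.mem_ofPred_eq]
  rw [this]; simpa using hc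

theorem pm_snoc (hPr : IsPlayMeasure δ Pr) (s : S) (σ π) (h : List S) (x t : S) :
    Pr s σ π (Cyl (h ++ [x, t])) =
      Pr s σ π (Cyl (h ++ [x])) * stepW δ σ π (h ++ [x]) x t := by
  cases h with
  | nil =>
    by_cases hx : x = s
    · subst hx
      simp [hPr.2, listProb_cons, listProb_nil]
    · simp [pm_zero hPr s x hx]
  | cons c h =>
    by_cases hx : c = s
    · subst hx
      simp [hPr.2, listProb_snoc]
    · simp [pm_zero hPr s c hx]

theorem pm_step [Countable S] (hPr : IsPlayMeasure δ Pr) (s : S) (σ π) :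
    ∀ᵐ ρ ∂(Pr s σ π), ∀ n, ∃ h, stepW δ σ π h (ρ n) (ρ (n + 1)) ≠ 0 := by
  have key : ∀ᵐ ρ ∂(Pr s σ π), ∀ l : List S, ρ ∈ Cyl l → Pr s σ π (Cyl l) ≠ 0 := by
    rw [ae_all_iff]
    intro l
    by_cases h0 : Pr s σ π (Cyl l) = 0
    · have : ∀ᵐ ρ ∂(Pr s σ π), ρ ∉ Cyl l := by
        rw [ae_iff]; simpa using h0
      filter_upwards [this] with ρ hρ h
      exact absurd h hρ
    · exact Filter.Eventually.of_forall fun _ _ => h0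
  filter_upwards [key] with ρ hρ n
  refine ⟨List.ofFn (fun i : Fin n => ρ i) ++ [ρ n], fun h0 => ?_⟩
  refine hρ (List.ofFn (fun i : Fin n => ρ i) ++ [ρ n, ρ (n + 1)]) ?_ ?_
  · have : List.ofFn (fun i : Fin n => ρ i) ++ [ρ n, ρ (n + 1)] =
      (List.ofFn (fun i : Fin n => ρ i) ++ [ρ n]) ++ [ρ (n + 1)] := by simp
    rw [this, mem_Cyl_append, mem_Cyl_append]
    exact ⟨⟨mem_Cyl_ofFn ρ n, by simp⟩, by simp⟩
  · rw [pm_snoc hPr, h0, mul_zero]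

end PlayMeasure

theorem stepW_inl [Fintype A₁] [Fintype A₂] (δ : S → A₁ → A₂ → PMF S)
    (σ : List (BarS S A₁ A₂) → PMF A₁) (π : List (BarS S A₁ A₂) → PMF A₂)
    (h : List (BarS S A₁ A₂)) (c : S) (a : A₁) (b : A₂) :
    stepW (barδ δ) σ π h (Sum.inl c) (Sum.inr (c, a, b)) = σ h a * π h b := by
  unfold stepW
  rw [tsum_eq_single a, tsum_eq_single b]
  · simp [barδ]
  · intro b' hb'
    simp [barδ, PMF.pure_apply, hb'.symm]
  · intro a' ha'
    simp [barδ, PMF.pure_apply, ha'.symm]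

theorem stepW_inl_ne [Fintype A₁] [Fintype A₂] (δ : S → A₁ → A₂ → PMF S)
    (σ : List (BarS S A₁ A₂) → PMF A₁) (π : List (BarS S A₁ A₂) → PMF A₂)
    (h : List (BarS S A₁ A₂)) (c : S) (y : BarS S A₁ A₂)
    (hy : stepW (barδ δ) σ π h (Sum.inl c) y ≠ 0) : ∃ a b, y = Sum.inr (c, a, b) := by
  by_contra! hcon
  apply hy
  simp [stepW, barδ, PMF.pure_apply, hcon]

theorem map_inl_inl (p : PMF S) (t : S) :
    (p.map (Sum.inl : S → BarS S A₁ A₂)) (Sum.inl t) = p t := by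
  rw [PMF.map_apply, tsum_eq_single t]
  · simp
  · intro t' ht'
    simp [ht'.symm]

theorem stepW_inr [Fintype A₁] [Fintype A₂] (δ : S → A₁ → A₂ → PMF S)
    (σ : List (BarS S A₁ A₂) → PMF A₁) (π : List (BarS S A₁ A₂) → PMF A₂)
    (h : List (BarS S A₁ A₂)) (c : S) (a : A₁) (b : A₂) (t : S) :
    stepW (barδ δ) σ π h (Sum.inr (c, a, b)) (Sum.inl t) = δ c a b t := by
  unfold stepW
  simp only [barδ, map_inl_inl, ENNReal.tsum_mul_right, ENNReal.tsum_mul_left, PMF.tsum_coe,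
    mul_one, one_mul]

theorem stepW_inr_ne [Fintype A₁] [Fintype A₂] (δ : S → A₁ → A₂ → PMF S)
    (σ : List (BarS S A₁ A₂) → PMF A₁) (π : List (BarS S A₁ A₂) → PMF A₂)
    (h : List (BarS S A₁ A₂)) (p : S × A₁ × A₂) (y : BarS S A₁ A₂)
    (hy : stepW (barδ δ) σ π h (Sum.inr p) y ≠ 0) : ∃ t, y = Sum.inl t := by
  obtain ⟨c, a, b⟩ := p
  rcases y with t | q
  · exact ⟨t, rfl⟩
  · exact absurd (by simp [stepW, barδ, PMF.map_apply]) hy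

/-- Even-length bar histories together with their projections. -/
inductive Legal : List (BarS S A₁ A₂) → List S → Prop
  | nil : Legal [] []
  | step (hb h c a b) : Legal hb h → Legal (hb ++ [Sum.inl c, Sum.inr (c, a, b)]) (h ++ [c])

/-- Two strategies that agree on legal histories. -/
def Rel {A : Type} (σ : List S → PMF A) (σb : List (BarS S A₁ A₂) → PMF A) : Prop :=
  ∀ hb h c, Legal hb h → σb (hb ++ [Sum.inl c]) = σ (h ++ [c])

/-- The event that from index `N` on, in state `cur`, the play alternates through `l`. -/
def Ev (A₁ A₂ : Type) : ℕ → S → List S → Set (ℕ → BarS S A₁ A₂)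
  | _, _, [] => Set.univ
  | N, c, t :: l => {ρ | ∃ a b, ρ (N + 1) = Sum.inr (c, a, b)} ∩
      ({ρ | ρ (N + 2) = Sum.inl t} ∩ Ev A₁ A₂ (N + 2) t l)

theorem measurableSet_Ev [MeasurableSpace (BarS S A₁ A₂)]
    [DiscreteMeasurableSpace (BarS S A₁ A₂)] (l : List S) :
    ∀ N c, MeasurableSet (Ev A₁ A₂ N c l) := by
  induction l with
  | nil => intro N c; exact MeasurableSet.univ
  | cons t l ih =>
    intro N c
    refine MeasurableSet.inter ?_ (MeasurableSet.inter ?_ (ih _ _))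
    · have hm : Measurable fun ρ : ℕ → BarS S A₁ A₂ => ρ (N + 1) := measurable_pi_apply _
      exact hm (MeasurableSet.of_discrete (s := {x | ∃ a b, x = Sum.inr (c, a, b)}))
    · have hm : Measurable fun ρ : ℕ → BarS S A₁ A₂ => ρ (N + 2) := measurable_pi_apply _
      exact hm (MeasurableSet.of_discrete (s := {x | x = Sum.inl t}))

theorem Ev_prob [Fintype A₁] [Fintype A₂] [MeasurableSpace (BarS S A₁ A₂)]
    [DiscreteMeasurableSpace (BarS S A₁ A₂)]
    {δ : S → A₁ → A₂ → PMF S}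
    {PrB : BarS S A₁ A₂ → (List (BarS S A₁ A₂) → PMF A₁) → (List (BarS S A₁ A₂) → PMF A₂) →
      Measure (ℕ → BarS S A₁ A₂)}
    (hPrB : IsPlayMeasure (barδ δ) PrB) (s : BarS S A₁ A₂) {σ π σb πb}
    (hσ : Rel σ σb) (hπ : Rel π πb) (l : List S) :
    ∀ hb h c, Legal hb h →
      PrB s σb πb (Cyl (hb ++ [Sum.inl c]) ∩ Ev A₁ A₂ hb.length c l) =
      PrB s σb πb (Cyl (hb ++ [Sum.inl c])) * listProb δ σ π h c l := by
  induction l with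
  | nil => intro hb h c _; simp [Ev, listProb_nil]
  | cons t l ih =>
    intro hb h c hL
    have hset : Cyl (hb ++ [Sum.inl c]) ∩ Ev A₁ A₂ hb.length c (t :: l) =
        ⋃ p : A₁ × A₂, (Cyl ((hb ++ [Sum.inl c, Sum.inr (c, p.1, p.2)]) ++ [Sum.inl t]) ∩
          Ev A₁ A₂ (hb ++ [Sum.inl c, Sum.inr (c, p.1, p.2)]).length t l) := by
      ext ρ
      have e : ∀ p : A₁ × A₂, hb ++ [Sum.inl c, Sum.inr (c, p.1, p.2)] =
        (hb ++ [Sum.inl c]) ++ [Sum.inr (c, p.1, p.2)] := by simp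
      simp only [e, Set.mem_iUnion, Set.mem_inter_iff, mem_Cyl_append, Ev, Set.mem_ofPred_eq,
        List.length_append, List.length_cons, List.length_nil, Prod.exists, zero_add, add_assoc,
        Nat.reduceAdd]
      constructor
      · rintro ⟨h1, ⟨a, b, h2⟩, h3, h4⟩
        exact ⟨a, b, ⟨⟨h1, h2⟩, h3⟩, h4⟩
      · rintro ⟨a, b, ⟨⟨h1, h2⟩, h3⟩, h4⟩
        exact ⟨h1, ⟨a, b, h2⟩, h3, h4⟩
    rw [hset, measure_iUnion]
    · have hterm : ∀ p : A₁ × A₂,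
          PrB s σb πb (Cyl ((hb ++ [Sum.inl c, Sum.inr (c, p.1, p.2)]) ++ [Sum.inl t]) ∩
            Ev A₁ A₂ (hb ++ [Sum.inl c, Sum.inr (c, p.1, p.2)]).length t l) =
          PrB s σb πb (Cyl (hb ++ [Sum.inl c])) * ((σ (h ++ [c]) p.1 * π (h ++ [c]) p.2 *
            δ c p.1 p.2 t) * listProb δ σ π (h ++ [c]) t l) := by
        rintro ⟨a, b⟩
        rw [ih _ _ _ (Legal.step hb h c a b hL)]
        have e : hb ++ [Sum.inl c, Sum.inr (c, a, b)] ++ [Sum.inl t] =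
          (hb ++ [Sum.inl c]) ++ [Sum.inr (c, a, b), Sum.inl t] := by simp
        have e2 : hb ++ [Sum.inl c] ++ [Sum.inr (c, a, b)] =
          hb ++ [Sum.inl c, Sum.inr (c, a, b)] := by simp
        simp only
        rw [e, pm_snoc hPrB, stepW_inr, e2, pm_snoc hPrB, stepW_inl, hσ _ _ _ hL, hπ _ _ _ hL]
        ring
      simp only [hterm]
      rw [ENNReal.tsum_mul_left, ENNReal.tsum_mul_right, listProb_cons]
      rw [ENNReal.tsum_prod (f := fun a b => σ (h ++ [c]) a * π (h ++ [c]) b * δ c a b t)]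
      rfl
    · rintro ⟨a, b⟩ ⟨a', b'⟩ hne
      refine Set.disjoint_left.2 fun ρ h1 h2 => hne ?_
      have e : ∀ (a : A₁) (b : A₂), hb ++ [Sum.inl c, Sum.inr (c, a, b)] =
        (hb ++ [Sum.inl c]) ++ [Sum.inr (c, a, b)] := by simp
      have h1 := h1.1
      have h2 := h2.1
      simp only [e, mem_Cyl_append] at h1 h2
      have := h1.1.2.symm.trans h2.1.2
      simpa using this
    · intro p
      exact (measurableSet_Cyl _).inter (measurableSet_Ev _ _ _)

/-- The even projection of a play. -/
def evenProj (ρ : ℕ → BarS S A₁ A₂) : ℕ → S := fun n => unbar (ρ (2 * n))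

/-- Well-formed plays. -/
def Good (ρ : ℕ → BarS S A₁ A₂) : Prop :=
  ∀ n, ∃ c a b d, ρ (2 * n) = Sum.inl c ∧ ρ (2 * n + 1) = Sum.inr (c, a, b) ∧
    ρ (2 * n + 2) = Sum.inl d

theorem Good_ae [Fintype A₁] [Fintype A₂] [Countable S] [MeasurableSpace (BarS S A₁ A₂)]
    [DiscreteMeasurableSpace (BarS S A₁ A₂)]
    {δ : S → A₁ → A₂ → PMF S}
    {PrB : BarS S A₁ A₂ → (List (BarS S A₁ A₂) → PMF A₁) → (List (BarS S A₁ A₂) → PMF A₂) →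
      Measure (ℕ → BarS S A₁ A₂)}
    (hPrB : IsPlayMeasure (barδ δ) PrB) (s : S) (σb πb) :
    ∀ᵐ ρ ∂(PrB (Sum.inl s) σb πb), Good ρ := by
  filter_upwards [pm_start hPrB (Sum.inl s) σb πb, pm_step hPrB (Sum.inl s) σb πb] with ρ h0 hs
  have step : ∀ n c, ρ (2 * n) = Sum.inl c → ∃ a b d, ρ (2 * n + 1) = Sum.inr (c, a, b) ∧
    ρ (2 * n + 2) = Sum.inl d := by
    intro n c hc
    obtain ⟨h, hh⟩ := hs (2 * n)
    rw [hc] at hh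
    obtain ⟨a, b, hab⟩ := stepW_inl_ne _ _ _ _ _ _ hh
    obtain ⟨h', hh'⟩ := hs (2 * n + 1)
    rw [hab] at hh'
    obtain ⟨d, hd⟩ := stepW_inr_ne _ _ _ _ _ _ hh'
    exact ⟨a, b, d, hab, hd⟩
  have ev : ∀ n, ∃ c, ρ (2 * n) = Sum.inl c := by
    intro n
    induction n with
    | zero => exact ⟨s, h0⟩
    | succ n ih =>
      obtain ⟨c, hc⟩ := ih
      obtain ⟨a, b, d, -, hd⟩ := step n c hc
      exact ⟨d, hd⟩
  intro n
  obtain ⟨c, hc⟩ := ev n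
  obtain ⟨a, b, d, h1, h2⟩ := step n c hc
  exact ⟨c, a, b, d, hc, h1, h2⟩

theorem mem_Ev_iff {ρ : ℕ → BarS S A₁ A₂} (hg : Good ρ) (l : List S) :
    ∀ n c, ρ (2 * n) = Sum.inl c →
      (ρ ∈ Ev A₁ A₂ (2 * n) c l ↔ ∀ i (hi : i < l.length), evenProj ρ (n + 1 + i) = l[i]) := by
  induction l with
  | nil => intro n c _; simp [Ev]
  | cons t l ih =>
    intro n c hc
    obtain ⟨c', a, b, d, h1, h2, h3⟩ := hg n
    have hcc : c' = c := by simpa using h1.symm.trans hc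
    subst hcc
    have hd : evenProj ρ (n + 1) = d := by
      simp [evenProj, mul_add, h3, unbar]
    have key : ρ ∈ Ev A₁ A₂ (2 * n) c' (t :: l) ↔
        (d = t ∧ ρ ∈ Ev A₁ A₂ (2 * (n + 1)) t l) := by
      simp only [Ev, Set.mem_inter_iff, Set.mem_ofPred_eq, h2, h3, mul_add, mul_one]
      simp
    rw [key]
    constructor
    · rintro ⟨rfl, he⟩ i hi
      have := (ih (n + 1) d (by rw [mul_add]; exact h3)).1 he
      cases i with
      | zero => simpa using hd
      | succ i =>
        have h4 := this i (by simpa using hi)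
        simp only [List.getElem_cons_succ]
        rw [← h4]; congr 1; omega
    · intro h
      have hdt : d = t := by
        have := h 0 (by simp)
        simpa [hd] using this
      subst hdt
      refine ⟨rfl, (ih (n + 1) d (by rw [mul_add]; exact h3)).2 fun i hi => ?_⟩
      have := h (i + 1) (by simpa using hi)
      simp only [List.getElem_cons_succ] at this
      rw [← this]; congr 1; omega

theorem key_eq [Fintype A₁] [Fintype A₂] [Countable S] [MeasurableSpace S]
    [DiscreteMeasurableSpace S] [MeasurableSpace (BarS S A₁ A₂)]
    [DiscreteMeasurableSpace (BarS S A₁ A₂)]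
    {δ : S → A₁ → A₂ → PMF S}
    {Pr : S → (List S → PMF A₁) → (List S → PMF A₂) → Measure (ℕ → S)}
    (hPr : IsPlayMeasure δ Pr)
    {PrB : BarS S A₁ A₂ → (List (BarS S A₁ A₂) → PMF A₁) → (List (BarS S A₁ A₂) → PMF A₂) →
      Measure (ℕ → BarS S A₁ A₂)}
    (hPrB : IsPlayMeasure (barδ δ) PrB) (s : S) {σ π σb πb}
    (hσ : Rel σ σb) (hπ : Rel π πb) {φ : Set (ℕ → S)} (hφ : MeasurableSet φ) :
    PrB (Sum.inl s) σb πb (barφ φ) = Pr s σ π φ := by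
  have := hPr.1 s σ π
  have := hPrB.1 (Sum.inl s) σb πb
  have hmeas : Measurable (evenProj : (ℕ → BarS S A₁ A₂) → ℕ → S) := by
    refine measurable_pi_lambda _ fun n => ?_
    exact (Measurable.of_discrete (f := unbar)).comp (measurable_pi_apply (2 * n))
  have : IsProbabilityMeasure ((PrB (Sum.inl s) σb πb).map evenProj) :=
    Measure.isProbabilityMeasure_map hmeas.aemeasurable
  have hgood := Good_ae hPrB s σb πb
  have hstart := pm_start hPrB (Sum.inl s) σb πb
  have heq : (PrB (Sum.inl s) σb πb).map evenProj = Pr s σ π := by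
    refine measure_ext_Cyl _ _ fun l => ?_
    rw [Measure.map_apply hmeas (measurableSet_Cyl l)]
    cases l with
    | nil =>
      have : Cyl ([] : List S) = Set.univ := by ext; simp [mem_Cyl]
      simp [this]
    | cons c l =>
      by_cases hc : c = s
      · subst hc
        have h1 := Ev_prob hPrB (Sum.inl c) hσ hπ l [] [] c Legal.nil
        simp only [List.nil_append, hPrB.2, listProb_nil, one_mul, List.length_nil] at h1
        rw [hPr.2, ← h1]
        apply measure_congr
        filter_upwards [hgood, hstart] with ρ hg h0
        apply propext
        have hE := mem_Ev_iff hg l 0 c h0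
        simp only [mul_zero] at hE
        change evenProj ρ ∈ Cyl (c :: l) ↔ ρ ∈ Cyl [Sum.inl c] ∧ ρ ∈ Ev A₁ A₂ 0 c l
        rw [hE]
        have h0' : evenProj ρ 0 = c := by simp [evenProj, h0, unbar]
        constructor
        · intro h
          rw [mem_Cyl] at h
          refine ⟨by simp [mem_Cyl, h0], fun i hi => ?_⟩
          have := h (i + 1) (by simpa using hi)
          simp only [List.getElem_cons_succ] at this
          rw [← this]; congr 1; omega
        · rintro ⟨-, h⟩
          rw [mem_Cyl]
          intro i hi
          cases i with
          | zero => simpa using h0'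
          | succ i =>
            have := h i (by simpa using hi)
            simp only [List.getElem_cons_succ]
            rw [← this]; congr 1; omega
      · rw [pm_zero hPr s c hc]
        refine measure_mono_null (fun ρ hρ => ?_) (ae_iff.1 hstart)
        intro h0
        have := mem_Cyl.1 hρ 0 (by simp)
        simp [evenProj, h0, unbar] at this
        exact hc this.symm
  rw [← heq, Measure.map_apply hmeas hφ]
  apply measure_congr
  filter_upwards [hgood] with ρ hg
  apply propext
  change ρ ∈ barφ φ ↔ evenProj ρ ∈ φ
  constructor
  · rintro ⟨-, -, h⟩; exact h
  · intro h
    refine ⟨fun n => ?_, fun n => ?_, h⟩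
    · obtain ⟨c, a, b, d, h1, h2, h3⟩ := hg n
      exact ⟨c, h1⟩
    · obtain ⟨c, a, b, d, h1, h2, h3⟩ := hg n
      exact ⟨_, h2⟩

/-- Elements at even positions. -/
def evens {α : Type} : List α → List α
  | [] => []
  | [x] => [x]
  | x :: _ :: r => x :: evens r

theorem map_evens {α β : Type} (f : α → β) (l : List α) :
    (evens l).map f = evens (l.map f) := by
  induction l using evens.induct with
  | case1 => rfl
  | case2 x => rfl
  | case3 x y r ih => simp [evens, ih]

/-- Lift a strategy to the reduced game. -/
noncomputable def liftS {A : Type} (σ : List S → PMF A) : List (BarS S A₁ A₂) → PMF A :=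
  fun h => σ ((evens h).map unbar)

/-- Restrict a strategy of the reduced game. -/
noncomputable def dropS {A : Type} (σb : List (BarS S A₁ A₂) → PMF A) : List S → PMF A :=
  fun h => σb ((h.flatMap fun c => [Sum.inl c, Sum.inl c]).dropLast)

theorem Legal.evens_eq {hb : List (BarS S A₁ A₂)} {h : List S} (hL : Legal hb h) :
    ∀ r, (evens (hb ++ r)).map unbar = h ++ (evens r).map unbar := by
  induction hL with
  | nil => simp
  | step hb h c a b _ ih =>
    intro r
    rw [List.append_assoc, ih]
    simp [evens, unbar]

theorem Rel_lift {A : Type} (σ : List S → PMF A) :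
    Rel (A₁ := A₁) (A₂ := A₂) σ (liftS σ) := by
  intro hb h c hL
  simp [liftS, hL.evens_eq, evens, unbar]

theorem obs_lift {A O : Type} {obs : S → O} {σ : List S → PMF A} (h : ObsBased obs σ) :
    ObsBased (barObs (A₁ := A₁) (A₂ := A₂) obs) (liftS σ) := by
  have hc : ∀ l : List (BarS S A₁ A₂),
      ((evens l).map unbar).map obs = evens (l.map (barObs obs)) := by
    intro l
    rw [← map_evens, List.map_map]
    congr 1
    ext x
    rcases x with x | ⟨x, a, b⟩ <;> rfl
  intro l l' hl
  exact h _ _ (by rw [hc, hc, hl])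

theorem Legal.obs_eq {O : Type} (obs : S → O) {hb : List (BarS S A₁ A₂)} {h : List S}
    (hL : Legal hb h) : hb.map (barObs obs) =
      (h.flatMap fun c => [(Sum.inl c : BarS S A₁ A₂), Sum.inl c]).map (barObs obs) := by
  induction hL with
  | nil => rfl
  | step hb h c a b _ ih =>
    rw [List.map_append, ih]
    simp [barObs]

theorem Rel_drop {A O : Type} {obs : S → O} {σb : List (BarS S A₁ A₂) → PMF A}
    (h : ObsBased (barObs obs) σb) : Rel (dropS σb) σb := by
  intro hb l c hL
  apply h
  have : ((l ++ [c]).flatMap fun c => [(Sum.inl c : BarS S A₁ A₂), Sum.inl c]).dropLast =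
      (l.flatMap fun c => [(Sum.inl c : BarS S A₁ A₂), Sum.inl c]) ++ [Sum.inl c] := by
    rw [List.flatMap_append, List.dropLast_append_of_ne_nil (by simp)]
    simp
  rw [this, List.map_append, List.map_append, hL.obs_eq obs]

theorem obs_drop {A O : Type} {obs : S → O} {σb : List (BarS S A₁ A₂) → PMF A}
    (h : ObsBased (barObs obs) σb) : ObsBased obs (dropS σb) := by
  have hc : ∀ l : List S,
      ((l.flatMap fun c => [(Sum.inl c : BarS S A₁ A₂), Sum.inl c]).dropLast).map (barObs obs) =
      ((l.map obs).flatMap fun o => [o, o]).dropLast := by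
    intro l
    rw [List.map_dropLast, List.map_flatMap, List.flatMap_map]
    rfl
  intro l l' hl
  exact h _ _ (by rw [hc, hc, hl])

end Helpers

theorem stmt_0 {S A₁ A₂ O₁ O₂ : Type}
    [Fintype S] [Nonempty S] [Fintype A₁] [Nonempty A₁] [Fintype A₂] [Nonempty A₂]
    [Fintype O₁] [Fintype O₂]
    [MeasurableSpace S] [DiscreteMeasurableSpace S]
    [MeasurableSpace A₁] [DiscreteMeasurableSpace A₁]
    [MeasurableSpace A₂] [DiscreteMeasurableSpace A₂]
    (δ : S → A₁ → A₂ → PMF S) (obs₁ : S → O₁) (obs₂ : S → O₂)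
    (φ : Set (ℕ → S)) (hφ : MeasurableSet φ)
    (Pr : S → (List S → PMF A₁) → (List S → PMF A₂) → Measure (ℕ → S))
    (hPr : IsPlayMeasure δ Pr)
    (PrB : BarS S A₁ A₂ → (List (BarS S A₁ A₂) → PMF A₁) → (List (BarS S A₁ A₂) → PMF A₂) →
      Measure (ℕ → BarS S A₁ A₂))
    (hPrB : IsPlayMeasure (barδ δ) PrB)
    (s : S) :
    ((∃ σ, ObsBased obs₁ σ ∧ ∀ π, ObsBased obs₂ π → Pr s σ π φ = 1) ↔
      (∃ σ, ObsBased (barObs obs₁) σ ∧ ∀ π, ObsBased (barObs obs₂) π →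
        PrB (Sum.inl s) σ π (barφ φ) = 1)) ∧
    ((∃ σ, ObsBased obs₁ σ ∧ ∀ π, ObsBased obs₂ π → 0 < Pr s σ π φ) ↔
      (∃ σ, ObsBased (barObs obs₁) σ ∧ ∀ π, ObsBased (barObs obs₂) π →
        0 < PrB (Sum.inl s) σ π (barφ φ))) := by
  have hd : DiscreteMeasurableSpace (BarS S A₁ A₂) :=
    ⟨fun B => measurableSet_sum_iff.2 ⟨MeasurableSet.of_discrete, MeasurableSet.of_discrete⟩⟩
  constructor
  · constructor
    · rintro ⟨σ, hσ, h⟩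
      refine ⟨liftS σ, obs_lift hσ, fun πb hπ => ?_⟩
      rw [key_eq hPr hPrB s (Rel_lift σ) (Rel_drop hπ) hφ]
      exact h _ (obs_drop hπ)
    · rintro ⟨σb, hσ, h⟩
      refine ⟨dropS σb, obs_drop hσ, fun π hπ => ?_⟩
      rw [← key_eq hPr hPrB s (Rel_drop hσ) (Rel_lift π) hφ]
      exact h _ (obs_lift hπ)
  · constructor
    · rintro ⟨σ, hσ, h⟩
      refine ⟨liftS σ, obs_lift hσ, fun πb hπ => ?_⟩
      rw [key_eq hPr hPrB s (Rel_lift σ) (Rel_drop hπ) hφ]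
      exact h _ (obs_drop hπ)
    · rintro ⟨σb, hσ, h⟩
      refine ⟨dropS σb, obs_drop hσ, fun π hπ => ?_⟩
      rw [← key_eq hPr hPrB s (Rel_drop hσ) (Rel_lift π) hφ]
      exact h _ (obs_lift hπ)


end Stmt0
end

section
/- Let G = (S, A₁, A₂, δ, obs₁, obs₂) be a concurrent game of partial observation, let φ ⊆ S^ω be a measurable objective, and let (Ḡ, φ̄) be the interaction-separation reduction of (G, φ). Then for every state s ∈ S, val₁^G(φ)(s) = val₁^{Ḡ}(φ̄)(s); moreover player 1 has an observation-based optimal strategy for φ from s in G if and only if player 1 has an observation-based optimal strategy for φ̄ from s in Ḡ. -/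
open MeasureTheory
open scoped ENNReal

namespace Stmt1

variable {S A₁ A₂ O₁ O₂ : Type}

/-- The cylinder set of infinite plays extending the finite prefix `l`. -/
def Cyl (l : List S) : Set (ℕ → S) := {ρ | ∀ i : Fin l.length, ρ i.1 = l.get i}

/-- Probability of observing the successive states `rest` after the history `hist ++ [cur]`,
when the players draw their actions independently according to `σ` and `π`, and successor
states are drawn according to `δ`. -/
noncomputable def listProb [Fintype A₁] [Fintype A₂] (δ : S → A₁ → A₂ → PMF S)
    (σ : List S → PMF A₁) (π : List S → PMF A₂) :
    List S → S → List S → ℝ≥0∞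
  | _, _, [] => 1
  | hist, cur, s' :: rest =>
      (∑' a, ∑' b, σ (hist ++ [cur]) a * π (hist ++ [cur]) b * δ cur a b s') *
        listProb δ σ π (hist ++ [cur]) s' rest

/-- `Pr` is the family of Ionescu–Tulcea play measures of the concurrent game `δ`:
`Pr s σ π` is a probability measure on `S^ω` (product σ-algebra, `S` discrete) and the
probability of each cylinder is the product of one-step transition probabilities. -/
def IsPlayMeasure [Fintype A₁] [Fintype A₂] [MeasurableSpace S] (δ : S → A₁ → A₂ → PMF S)
    (Pr : S → (List S → PMF A₁) → (List S → PMF A₂) → Measure (ℕ → S)) : Prop :=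
  (∀ s σ π, IsProbabilityMeasure (Pr s σ π)) ∧
    ∀ s σ π (l : List S), Pr s σ π (Cyl (s :: l)) = listProb δ σ π [] s l

/-- An observation-based strategy only depends on the observation sequence. -/
def ObsBased {A O : Type} (obs : S → O) (σ : List S → PMF A) : Prop :=
  ∀ h h' : List S, h.map obs = h'.map obs → σ h = σ h'

/-- The state space of the interaction-separation reduction: `S ⊔ (S × A₁ × A₂)`. -/
abbrev BarS (S A₁ A₂ : Type) : Type := S ⊕ S × A₁ × A₂

/-- Transition function of the interaction-separation reduction: from `s ∈ S` the action
pair `(a₁, a₂)` leads deterministically to `(s, a₁, a₂)`, and from `(s, a₁, a₂)`, for every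
action pair, the successor is drawn in `S` according to `δ s a₁ a₂`. -/
noncomputable def barδ (δ : S → A₁ → A₂ → PMF S) :
    BarS S A₁ A₂ → A₁ → A₂ → PMF (BarS S A₁ A₂)
  | Sum.inl s, a₁, a₂ => PMF.pure (Sum.inr (s, a₁, a₂))
  | Sum.inr (s, a₁, a₂), _, _ => (δ s a₁ a₂).map Sum.inl

/-- Observations in the reduced game: `(s, a₁, a₂)` is observed like `s`. -/
def barObs {O : Type} (obs : S → O) : BarS S A₁ A₂ → O
  | Sum.inl s => obs s
  | Sum.inr (s, _, _) => obs s

/-- Projection of reduced states to original states. -/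
def unbar : BarS S A₁ A₂ → S
  | Sum.inl s => s
  | Sum.inr (s, _, _) => s

/-- The reduced objective `φ̄`: plays alternating between `S` (at even positions) and
`S × A₁ × A₂` (at odd positions) whose even subsequence belongs to `φ`. -/
def barφ (φ : Set (ℕ → S)) : Set (ℕ → BarS S A₁ A₂) :=
  {ρ | (∀ n, ∃ s, ρ (2 * n) = Sum.inl s) ∧ (∀ n, ∃ p, ρ (2 * n + 1) = Sum.inr p) ∧
    (fun n => unbar (ρ (2 * n))) ∈ φ}

/-- The value for player 1: sup over observation-based strategies of player 1 of the inf
over observation-based strategies of player 2 of the winning probability. -/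
noncomputable def val {O₁ O₂ : Type} [Fintype A₁] [Fintype A₂] [MeasurableSpace S]
    (Pr : S → (List S → PMF A₁) → (List S → PMF A₂) → Measure (ℕ → S))
    (obs₁ : S → O₁) (obs₂ : S → O₂) (φ : Set (ℕ → S)) (s : S) : ℝ≥0∞ :=
  ⨆ σ : {σ : List S → PMF A₁ // ObsBased obs₁ σ},
    ⨅ π : {π : List S → PMF A₂ // ObsBased obs₂ π}, Pr s σ.1 π.1 φ

section Aux

/-- One-step transition probability. -/
noncomputable def stepP {S A₁ A₂ : Type} (δ : S → A₁ → A₂ → PMF S)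
    (σ : List S → PMF A₁) (π : List S → PMF A₂) (h : List S) (c d : S) : ℝ≥0∞ :=
  ∑' a, ∑' b, σ (h ++ [c]) a * π (h ++ [c]) b * δ c a b d

theorem listProb_snoc {S A₁ A₂ : Type} [Fintype A₁] [Fintype A₂] (δ : S → A₁ → A₂ → PMF S)
    (σ : List S → PMF A₁) (π : List S → PMF A₂) (c d : S) (l : List S) :
    ∀ (hist : List S) (cur : S) (m : List S), cur :: l = m ++ [c] →
      listProb δ σ π hist cur (l ++ [d]) =
        listProb δ σ π hist cur l * stepP δ σ π (hist ++ m) c d := by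
  induction l with
  | nil =>
    intro hist cur m h
    cases m with
    | nil => simp at h; subst h; simp [listProb, stepP]
    | cons x m => simp at h
  | cons x l ih =>
    intro hist cur m h
    cases m with
    | nil => simp at h
    | cons y m =>
      simp only [List.cons_append, List.cons.injEq] at h
      obtain ⟨rfl, h⟩ := h
      simp only [List.cons_append, listProb]
      rw [ih (hist ++ [cur]) x m h]
      simp [mul_assoc]

theorem mem_Cyl_append {S : Type} (h : List S) (c : S) (ρ : ℕ → S) :
    ρ ∈ Cyl (h ++ [c]) ↔ ρ ∈ Cyl h ∧ ρ h.length = c := by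
  simp only [Cyl, Set.mem_ofPred_eq, Fin.forall_iff, List.get_eq_getElem]
  constructor
  · intro H
    refine ⟨fun i hi => ?_, ?_⟩
    · rw [H i (by simp; omega), List.getElem_append_left hi]
    · rw [H h.length (by simp)]; simp
  · rintro ⟨H1, H2⟩ i hi
    by_cases hi' : i < h.length
    · rw [H1 i hi', List.getElem_append_left hi']
    · have : i = h.length := by simp at hi; omega
      subst this; simp [H2]

theorem mem_Cyl_nil {S : Type} (ρ : ℕ → S) : ρ ∈ Cyl ([] : List S) := by
  simp [Cyl, Fin.forall_iff]

theorem mem_Cyl_range {S : Type} (ρ : ℕ → S) (n : ℕ) : ρ ∈ Cyl ((List.range n).map ρ) := by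
  simp [Cyl, Fin.forall_iff]

theorem Cyl_eq {S : Type} (l : List S) (ρ : ℕ → S) :
    ρ ∈ Cyl l ↔ ∀ i (h : i < l.length), ρ i = l[i] := by
  simp [Cyl, Fin.forall_iff]

theorem measurableSet_Cyl {S : Type} [MeasurableSpace S] [DiscreteMeasurableSpace S]
    (l : List S) : MeasurableSet (Cyl l) := by
  have : Cyl l = ⋂ i : Fin l.length, (fun ρ : ℕ → S => ρ i.1) ⁻¹' {l.get i} := by
    ext ρ; simp [Cyl]
  rw [this]
  exact MeasurableSet.iInter fun i => measurable_pi_apply _ (MeasurableSet.of_discrete)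

theorem measure_ext_Cyl {S : Type} [Countable S] [MeasurableSpace S] [DiscreteMeasurableSpace S]
    (μ ν : Measure (ℕ → S)) [IsProbabilityMeasure μ] [IsProbabilityMeasure ν]
    (h : ∀ l, μ (Cyl l) = ν (Cyl l)) : μ = ν := by
  refine MeasureTheory.ext_of_generate_finite (Set.range (Cyl (S := S))) ?_ ?_ ?_ (by simp)
  · apply le_antisymm
    · refine iSup_le fun n => ?_
      rw [← measurable_iff_comap_le]
      refine @measurable_to_countable' _ _ _ _ (MeasurableSpace.generateFrom _) _ fun x => ?_
      have : (fun ρ : ℕ → S => ρ n) ⁻¹' {x} = ⋃ l ∈ {l : List S | l[n]? = some x}, Cyl l := by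
        ext ρ
        simp only [Set.mem_preimage, Set.mem_singleton_iff, Set.mem_ofPred_eq, Set.mem_iUnion,
          exists_prop]
        constructor
        · intro hx
          refine ⟨(List.range (n+1)).map ρ, ?_, mem_Cyl_range _ _⟩
          simp [hx]
        · rintro ⟨l, hl, hρ⟩
          obtain ⟨hn, rfl⟩ := List.getElem?_eq_some_iff.1 hl
          exact (Cyl_eq _ _).1 hρ n hn
      rw [this]
      exact MeasurableSet.biUnion (Set.to_countable _)
        fun l _ => MeasurableSpace.measurableSet_generateFrom ⟨l, rfl⟩
    · refine MeasurableSpace.generateFrom_le ?_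
      rintro _ ⟨l, rfl⟩
      exact measurableSet_Cyl l
  · rintro _ ⟨l, rfl⟩ _ ⟨l', rfl⟩ ⟨ρ, h1, h2⟩
    rw [Cyl_eq] at h1 h2
    rcases le_total l.length l'.length with hl | hl
    · refine ⟨l', ?_⟩
      symm
      rw [Set.inter_eq_right]
      intro ρ' h'
      rw [Cyl_eq] at h' ⊢
      intro i hi
      rw [h' i (by omega), ← h1 i hi, h2 i (by omega)]
    · refine ⟨l, ?_⟩
      symm
      rw [Set.inter_eq_left]
      intro ρ' h'
      rw [Cyl_eq] at h' ⊢
      intro i hi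
      rw [h' i (by omega), ← h1 i (by omega), h2 i (by omega)]
  · rintro _ ⟨l, rfl⟩
    exact h l

section PM
variable {S A₁ A₂ : Type} [Fintype A₁] [Fintype A₂] [MeasurableSpace S]
  [DiscreteMeasurableSpace S] {δ : S → A₁ → A₂ → PMF S}
  {Pr : S → (List S → PMF A₁) → (List S → PMF A₂) → Measure (ℕ → S)}

theorem Cyl_single (hPr : IsPlayMeasure δ Pr) (s : S) (σ π) : Pr s σ π (Cyl [s]) = 1 := by
  rw [hPr.2]; simp [listProb]

theorem Cyl_ne (hPr : IsPlayMeasure δ Pr) (s : S) (σ π) (x : S) (l : List S) (hx : x ≠ s) :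
    Pr s σ π (Cyl (x :: l)) = 0 := by
  have := hPr.1 s σ π
  have h0 : Pr s σ π (Cyl [s])ᶜ = 0 :=
    (prob_compl_eq_zero_iff (measurableSet_Cyl _)).2 (Cyl_single hPr s σ π)
  refine measure_mono_null ?_ h0
  intro ρ hρ hs
  rw [Cyl_eq] at hρ hs
  exact hx ((hρ 0 (by simp)).symm.trans (hs 0 (by simp)))

theorem Cyl_snoc (hPr : IsPlayMeasure δ Pr) (s : S) (σ π) (h : List S) (c d : S) :
    Pr s σ π (Cyl (h ++ [c] ++ [d])) = Pr s σ π (Cyl (h ++ [c])) * stepP δ σ π h c d := by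
  obtain ⟨x, l, hl⟩ : ∃ x l, h ++ [c] = x :: l := List.exists_cons_of_ne_nil (by simp)
  rw [hl, List.cons_append]
  by_cases hx : x = s
  · subst hx
    rw [hPr.2, hPr.2, listProb_snoc δ σ π c d l [] x h hl.symm]; simp
  · rw [Cyl_ne hPr _ _ _ _ _ hx, Cyl_ne hPr _ _ _ _ _ hx, zero_mul]

end PM

/-- Valid reduced histories (of even length) with their projection. -/
inductive Vh {S A₁ A₂ : Type} : List (BarS S A₁ A₂) → List S → Prop
  | nil : Vh [] []
  | snoc (H h c a b) : Vh H h → Vh (H ++ [Sum.inl c] ++ [Sum.inr (c, a, b)]) (h ++ [c])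

/-- Compatibility of a reduced strategy with an original one. -/
def Compat {S A₁ A₂ A : Type} (τ : List S → PMF A) (τB : List (BarS S A₁ A₂) → PMF A) : Prop :=
  ∀ H h c, Vh H h → τB (H ++ [Sum.inl c]) = τ (h ++ [c])

def evens {α : Type} : List α → List α
  | [] => []
  | [x] => [x]
  | x :: _ :: t => x :: evens t

theorem evens_map {α β : Type} (f : α → β) : ∀ l : List α, evens (l.map f) = (evens l).map f
  | [] => rfl
  | [x] => rfl
  | x :: y :: t => by simp [evens, evens_map f t]

theorem evens_map_unbar {S A₁ A₂ : Type} {H : List (BarS S A₁ A₂)} {h : List S} (hv : Vh H h) :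
    ∀ t, (evens (H ++ t)).map unbar = h ++ (evens t).map unbar := by
  induction hv with
  | nil => intro t; simp
  | snoc H h c a b _ ih =>
    intro t
    have := ih ([Sum.inl c] ++ [Sum.inr (c, a, b)] ++ t)
    simp only [List.append_assoc] at this ⊢
    rw [this]
    simp [evens, unbar]

theorem obs_unbar {S A₁ A₂ O : Type} (obs : S → O) (x : BarS S A₁ A₂) :
    obs (unbar x) = barObs obs x := by
  rcases x with x | ⟨x, a, b⟩ <;> rfl

theorem exists_bar {S A₁ A₂ A O : Type} (obs : S → O) (τ : List S → PMF A) (hτ : ObsBased obs τ) :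
    ∃ τB : List (BarS S A₁ A₂) → PMF A, ObsBased (barObs obs) τB ∧ Compat τ τB := by
  refine ⟨fun H => τ ((evens H).map unbar), ?_, ?_⟩
  · intro H H' e
    apply hτ
    have e2 := congrArg evens e
    rw [evens_map, evens_map] at e2
    simpa [Function.comp_def, obs_unbar] using e2
  · intro H h c hv
    simp only [evens_map_unbar hv]
    rfl

theorem exists_unbar {S A₁ A₂ A O : Type} (obs : S → O) (τB : List (BarS S A₁ A₂) → PMF A)
    (hτ : ObsBased (barObs obs) τB) :
    ∃ τ : List S → PMF A, ObsBased obs τ ∧ Compat τ τB := by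
  have key : ∀ h : List S, ((h.flatMap fun c => [(Sum.inl c : BarS S A₁ A₂), Sum.inl c])).map
      (barObs obs) = (h.map obs).flatMap fun o => [o, o] := by
    intro h
    induction h with
    | nil => rfl
    | cons c h ih => simp [ih, barObs]
  refine ⟨fun h => τB (h.flatMap fun c => [Sum.inl c, Sum.inl c]).dropLast, ?_, ?_⟩
  · intro h h' e
    apply hτ
    rw [List.map_dropLast, List.map_dropLast, key, key, e]
  · intro H h c hv
    apply hτ
    have e : ((h ++ [c]).flatMap fun c => [(Sum.inl c : BarS S A₁ A₂), Sum.inl c]).dropLast =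
        (h.flatMap fun c => [(Sum.inl c : BarS S A₁ A₂), Sum.inl c]) ++ [Sum.inl c] := by
      rw [List.flatMap_append, List.dropLast_append_of_ne_nil (by simp)]
      rfl
    rw [e, List.map_append, List.map_append, key]
    congr 1
    induction hv with
    | nil => rfl
    | snoc H h c a b _ ih => simp [← ih, barObs]

section Main
variable {S A₁ A₂ : Type} [Fintype S] [Fintype A₁] [Fintype A₂]

theorem step_inl (δ : S → A₁ → A₂ → PMF S) (σ π) (H : List (BarS S A₁ A₂)) (c : S) (a b) :
    stepP (barδ δ) σ π H (Sum.inl c) (Sum.inr (c, a, b)) =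
      σ (H ++ [Sum.inl c]) a * π (H ++ [Sum.inl c]) b := by
  unfold stepP
  rw [tsum_eq_single a, tsum_eq_single b]
  · simp [barδ]
  · intro b' hb'; simp [barδ, PMF.pure_apply, hb'.symm]
  · intro a' ha'; simp [barδ, PMF.pure_apply, ha'.symm]

theorem step_inl_bad (δ : S → A₁ → A₂ → PMF S) (σ π) (H : List (BarS S A₁ A₂)) (c : S) (y)
    (hy : ∀ a b, y ≠ Sum.inr (c, a, b)) :
    stepP (barδ δ) σ π H (Sum.inl c) y = 0 := by
  simp [stepP, barδ, PMF.pure_apply, hy]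

theorem step_inr (δ : S → A₁ → A₂ → PMF S) (σ π) (H : List (BarS S A₁ A₂)) (c : S) (a b x) :
    stepP (barδ δ) σ π H (Sum.inr (c, a, b)) (Sum.inl x) = δ c a b x := by
  have e : ((δ c a b).map (Sum.inl : S → BarS S A₁ A₂)) (Sum.inl x) = δ c a b x := by
    rw [PMF.map_apply, tsum_eq_single x]
    · simp
    · intro x' hx'; simp [hx'.symm]
  simp only [stepP, barδ, e, ENNReal.tsum_mul_right, ENNReal.tsum_mul_left, PMF.tsum_coe, mul_one,
    one_mul]

theorem step_inr_bad (δ : S → A₁ → A₂ → PMF S) (σ π) (H : List (BarS S A₁ A₂)) (p q) :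
    stepP (barδ δ) σ π H (Sum.inr p) (Sum.inr q) = 0 := by
  obtain ⟨c, a, b⟩ := p
  simp [stepP, barδ, PMF.map_apply]

/-- The play continues through `rest` at positions `k+1, k+3, …`. -/
def Cont : ℕ → List S → Set (ℕ → BarS S A₁ A₂)
  | _, [] => Set.univ
  | k, x :: rest => {ρ | ρ (k + 1) = Sum.inl x} ∩ Cont (k + 2) rest

variable [MeasurableSpace S] [DiscreteMeasurableSpace S]
    [MeasurableSpace A₁] [DiscreteMeasurableSpace A₁]
    [MeasurableSpace A₂] [DiscreteMeasurableSpace A₂]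

instance barDisc : DiscreteMeasurableSpace (BarS S A₁ A₂) :=
  ⟨fun _ => measurableSet_sum_iff.2 ⟨MeasurableSet.of_discrete, MeasurableSet.of_discrete⟩⟩

theorem main_ind {δ : S → A₁ → A₂ → PMF S}
    {PrB : BarS S A₁ A₂ → (List (BarS S A₁ A₂) → PMF A₁) → (List (BarS S A₁ A₂) → PMF A₂) →
      Measure (ℕ → BarS S A₁ A₂)}
    (hPrB : IsPlayMeasure (barδ δ) PrB) (s : S) {σ σB π πB}
    (hσ : Compat σ σB) (hπ : Compat π πB) (rest : List S) :
    ∀ (H : List (BarS S A₁ A₂)) (h : List S) (c : S), Vh H h →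
      PrB (Sum.inl s) σB πB (Cyl (H ++ [Sum.inl c]) ∩ Cont (H.length + 1) rest) =
        PrB (Sum.inl s) σB πB (Cyl (H ++ [Sum.inl c])) * listProb δ σ π h c rest := by
  induction rest with
  | nil => intro H h c _; simp [Cont, listProb]
  | cons x rest ih =>
    intro H h c hv
    set μ := PrB (Sum.inl s) σB πB with hμ
    set E := Cyl (H ++ [Sum.inl c]) ∩ Cont (H.length + 1) (x :: rest) with hE
    have hsum : μ E = ∑ y : BarS S A₁ A₂, μ (Cyl (H ++ [Sum.inl c] ++ [y] ++ [Sum.inl x]) ∩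
        Cont (H.length + 3) rest) := by
      have hm : ∀ y : BarS S A₁ A₂,
          MeasurableSet ((fun ρ : ℕ → BarS S A₁ A₂ => ρ (H.length + 1)) ⁻¹' {y}) :=
        fun y => measurable_pi_apply _ (MeasurableSet.of_discrete)
      have h1 := MeasureTheory.sum_measure_preimage_singleton (μ := μ.restrict E)
        (Finset.univ : Finset (BarS S A₁ A₂)) (f := fun ρ => ρ (H.length + 1))
        (fun y _ => hm y)
      rw [Finset.coe_univ, Set.preimage_univ, Measure.restrict_apply_univ] at h1
      rw [← h1]
      refine Finset.sum_congr rfl fun y _ => ?_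
      rw [Measure.restrict_apply (hm y)]
      congr 1
      ext ρ
      simp only [hE, Cont, Set.mem_inter_iff, mem_Cyl_append, Set.mem_preimage,
        Set.mem_singleton_iff, Set.mem_ofPred_eq, List.length_append, List.length_singleton]
      tauto
    have hbad : ∀ y : BarS S A₁ A₂, (∀ a b, y ≠ Sum.inr (c, a, b)) →
        μ (Cyl (H ++ [Sum.inl c] ++ [y] ++ [Sum.inl x]) ∩ Cont (H.length + 3) rest) = 0 := by
      intro y hy
      refine measure_mono_null Set.inter_subset_left ?_
      rw [hμ, Cyl_snoc hPrB, Cyl_snoc hPrB, step_inl_bad _ _ _ _ _ _ hy]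
      simp
    have hgood : ∀ a b, μ (Cyl (H ++ [Sum.inl c] ++ [Sum.inr (c, a, b)] ++ [Sum.inl x]) ∩
        Cont (H.length + 3) rest) = μ (Cyl (H ++ [Sum.inl c])) *
          ((σ (h ++ [c]) a * π (h ++ [c]) b * δ c a b x) *
            listProb δ σ π (h ++ [c]) x rest) := by
      intro a b
      have := ih _ _ x (Vh.snoc H h c a b hv)
      simp only [List.length_append, List.length_singleton] at this
      rw [this, hμ, Cyl_snoc hPrB, Cyl_snoc hPrB, step_inl, step_inr, hσ H h c hv, hπ H h c hv]
      ring
    rw [hsum, Fintype.sum_sum_type, Finset.sum_eq_zero (fun y _ => hbad _ (by simp)), zero_add,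
      Fintype.sum_prod_type, Finset.sum_eq_single c]
    · simp only [hgood, listProb, Fintype.sum_prod_type, tsum_fintype, ← Finset.mul_sum,
        ← Finset.sum_mul]
    · intro c' _ hc'
      exact Finset.sum_eq_zero fun y _ => hbad _ (by rintro a b ⟨⟩; exact hc' rfl)
    · simp

theorem alt_ae {δ : S → A₁ → A₂ → PMF S}
    {PrB : BarS S A₁ A₂ → (List (BarS S A₁ A₂) → PMF A₁) → (List (BarS S A₁ A₂) → PMF A₂) →
      Measure (ℕ → BarS S A₁ A₂)}
    (hPrB : IsPlayMeasure (barδ δ) PrB) (s : S) (σB πB) :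
    ∀ᵐ ρ ∂(PrB (Sum.inl s) σB πB), ρ 0 = Sum.inl s ∧
      ∀ n, (ρ (n + 1)).isLeft = !(ρ n).isLeft := by
  have := hPrB.1 (Sum.inl s) σB πB
  have h0 : ∀ᵐ ρ ∂(PrB (Sum.inl s) σB πB), ρ ∈ Cyl [(Sum.inl s : BarS S A₁ A₂)] :=
    (prob_compl_eq_zero_iff (measurableSet_Cyl _)).2 (Cyl_single hPrB _ _ _)
  have h1 : ∀ᵐ ρ ∂(PrB (Sum.inl s) σB πB), ∀ (h : List (BarS S A₁ A₂)) (c d : BarS S A₁ A₂),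
      d.isLeft ≠ !c.isLeft → ρ ∉ Cyl (h ++ [c] ++ [d]) := by
    simp only [ae_all_iff]
    intro h c d hcd
    have : PrB (Sum.inl s) σB πB (Cyl (h ++ [c] ++ [d])) = 0 := by
      rw [Cyl_snoc hPrB]
      rcases c with c | c <;> rcases d with d | d <;> simp at hcd
      · rw [step_inl_bad _ _ _ _ _ _ (by simp), mul_zero]
      · rw [step_inr_bad, mul_zero]
    exact measure_eq_zero_iff_ae_notMem.1 this
  filter_upwards [h0, h1] with ρ h0 h1
  refine ⟨(Cyl_eq _ _).1 h0 0 (by simp), fun n => ?_⟩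
  by_contra hn
  refine h1 ((List.range n).map ρ) _ _ hn ?_
  rw [mem_Cyl_append, mem_Cyl_append]
  refine ⟨⟨mem_Cyl_range _ _, ?_⟩, ?_⟩ <;> simp

theorem mem_Cont_iff (rest : List S) : ∀ (k : ℕ) (ρ : ℕ → BarS S A₁ A₂),
    ρ ∈ Cont k rest ↔ ∀ i (h : i < rest.length), ρ (k + 1 + 2 * i) = Sum.inl rest[i] := by
  induction rest with
  | nil => simp [Cont]
  | cons x rest ih =>
    intro k ρ
    simp only [Cont, Set.mem_inter_iff, Set.mem_ofPred_eq, ih]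
    constructor
    · rintro ⟨h1, h2⟩ i hi
      cases i with
      | zero => simpa using h1
      | succ i =>
        have := h2 i (by simpa using hi)
        rw [show k + 1 + 2 * (i + 1) = k + 2 + 1 + 2 * i by ring]
        simpa using this
    · intro H
      refine ⟨H 0 (by simp), fun i hi => ?_⟩
      have := H (i + 1) (by simpa using hi)
      rw [show k + 1 + 2 * (i + 1) = k + 2 + 1 + 2 * i by ring] at this
      simpa using this

theorem main_eq {δ : S → A₁ → A₂ → PMF S}
    {Pr : S → (List S → PMF A₁) → (List S → PMF A₂) → Measure (ℕ → S)}
    (hPr : IsPlayMeasure δ Pr)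
    {PrB : BarS S A₁ A₂ → (List (BarS S A₁ A₂) → PMF A₁) → (List (BarS S A₁ A₂) → PMF A₂) →
      Measure (ℕ → BarS S A₁ A₂)}
    (hPrB : IsPlayMeasure (barδ δ) PrB) (s : S) {σ σB π πB}
    (hσ : Compat σ σB) (hπ : Compat π πB) (φ : Set (ℕ → S)) (hφ : MeasurableSet φ) :
    Pr s σ π φ = PrB (Sum.inl s) σB πB (barφ φ) := by
  have i1 := hPr.1 s σ π
  have i2 := hPrB.1 (Sum.inl s) σB πB
  set T : (ℕ → BarS S A₁ A₂) → (ℕ → S) := fun ρ n => unbar (ρ (2 * n)) with hT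
  have hTm : Measurable T := measurable_pi_lambda _ fun n =>
    (measurable_of_finite (unbar (S := S) (A₁ := A₁) (A₂ := A₂))).comp (measurable_pi_apply _)
  have i3 : IsProbabilityMeasure ((PrB (Sum.inl s) σB πB).map T) :=
    Measure.isProbabilityMeasure_map hTm.aemeasurable
  have halt : ∀ᵐ ρ ∂(PrB (Sum.inl s) σB πB), ρ 0 = Sum.inl s ∧
      (∀ n, ∃ s, ρ (2 * n) = Sum.inl s) ∧ (∀ n, ∃ p, ρ (2 * n + 1) = Sum.inr p) := by
    filter_upwards [alt_ae hPrB s σB πB] with ρ ⟨h0, h1⟩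
    have he : ∀ n, (ρ (2 * n)).isLeft = true := by
      intro n
      induction n with
      | zero => simp [h0]
      | succ n ih =>
        rw [show 2 * (n + 1) = 2 * n + 1 + 1 by ring, h1, h1, ih]; rfl
    refine ⟨h0, fun n => Sum.isLeft_iff.1 (he n), fun n => Sum.isRight_iff.1 ?_⟩
    have := h1 (2 * n)
    rw [he n] at this
    simpa using this
  have hmap : Pr s σ π = (PrB (Sum.inl s) σB πB).map T := by
    refine measure_ext_Cyl _ _ fun l => ?_
    rw [Measure.map_apply hTm (measurableSet_Cyl l)]
    cases l with
    | nil =>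
      have e : ∀ (X : Type), Cyl ([] : List X) = Set.univ := fun X =>
        Set.eq_univ_of_forall mem_Cyl_nil
      simp [e]
    | cons x l =>
      by_cases hx : x = s
      · subst hx
        have := main_ind hPrB x hσ hπ l [] [] x Vh.nil
        simp only [List.nil_append] at this
        rw [Cyl_single hPrB, one_mul] at this
        rw [hPr.2, ← this]
        refine measure_congr ?_
        filter_upwards [halt] with ρ ⟨h0, h1, _⟩
        refine propext ?_
        change ρ ∈ Cyl [Sum.inl x] ∩ Cont (0 + 1) l ↔ T ρ ∈ Cyl (x :: l)
        rw [Set.mem_inter_iff, Cyl_eq, mem_Cont_iff, Cyl_eq]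
        constructor
        · rintro ⟨_, h2⟩ i hi
          cases i with
          | zero => simp [hT, h0, unbar]
          | succ i =>
            have := h2 i (by simpa using hi)
            rw [show 0 + 1 + 1 + 2 * i = 2 * (i + 1) by ring] at this
            simp [hT, this, unbar]
        · intro H
          refine ⟨?_, fun i hi => ?_⟩
          · intro i hi
            have : i = 0 := by simpa using hi
            subst this; simpa using h0
          · have := H (i + 1) (by simpa using hi)
            obtain ⟨t, ht⟩ := h1 (i + 1)
            rw [show 0 + 1 + 1 + 2 * i = 2 * (i + 1) by ring, ht]
            simp only [hT, ht, unbar] at this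
            simpa using this
      · rw [Cyl_ne hPr _ _ _ _ _ hx]
        symm
        rw [measure_eq_zero_iff_ae_notMem]
        filter_upwards [halt] with ρ ⟨h0, _⟩ hρ
        have := (Cyl_eq _ _).1 hρ 0 (by simp)
        simp only [hT, mul_zero, h0, unbar] at this
        exact hx (by simpa using this.symm)
  rw [hmap, Measure.map_apply hTm hφ]
  refine measure_congr ?_
  filter_upwards [halt] with ρ ⟨_, h1, h2⟩
  refine propext ?_
  exact ⟨fun h => ⟨h1, h2, h⟩, fun h => h.2.2⟩

end Main

end Aux

theorem stmt_1 {S A₁ A₂ O₁ O₂ : Type}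
    [Fintype S] [Nonempty S] [Fintype A₁] [Nonempty A₁] [Fintype A₂] [Nonempty A₂]
    [Fintype O₁] [Fintype O₂]
    [MeasurableSpace S] [DiscreteMeasurableSpace S]
    [MeasurableSpace A₁] [DiscreteMeasurableSpace A₁]
    [MeasurableSpace A₂] [DiscreteMeasurableSpace A₂]
    (δ : S → A₁ → A₂ → PMF S) (obs₁ : S → O₁) (obs₂ : S → O₂)
    (φ : Set (ℕ → S)) (hφ : MeasurableSet φ)
    (Pr : S → (List S → PMF A₁) → (List S → PMF A₂) → Measure (ℕ → S))
    (hPr : IsPlayMeasure δ Pr)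
    (PrB : BarS S A₁ A₂ → (List (BarS S A₁ A₂) → PMF A₁) → (List (BarS S A₁ A₂) → PMF A₂) →
      Measure (ℕ → BarS S A₁ A₂))
    (hPrB : IsPlayMeasure (barδ δ) PrB)
    (s : S) :
    val Pr obs₁ obs₂ φ s = val PrB (barObs obs₁) (barObs obs₂) (barφ φ) (Sum.inl s) ∧
    ((∃ σ, ObsBased obs₁ σ ∧
        (⨅ π : {π : List S → PMF A₂ // ObsBased obs₂ π}, Pr s σ π.1 φ) =
          val Pr obs₁ obs₂ φ s) ↔
      (∃ σ, ObsBased (barObs obs₁) σ ∧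
        (⨅ π : {π : List (BarS S A₁ A₂) → PMF A₂ // ObsBased (barObs obs₂) π},
            PrB (Sum.inl s) σ π.1 (barφ φ)) =
          val PrB (barObs obs₁) (barObs obs₂) (barφ φ) (Sum.inl s))) := by
  have hinf : ∀ σ σB, Compat σ σB →
      (⨅ π : {π : List S → PMF A₂ // ObsBased obs₂ π}, Pr s σ π.1 φ) =
      (⨅ π : {π : List (BarS S A₁ A₂) → PMF A₂ // ObsBased (barObs obs₂) π},
            PrB (Sum.inl s) σB π.1 (barφ φ)) := by
    intro σ σB hσ
    apply le_antisymm
    · refine le_iInf fun ⟨πB, hB⟩ => ?_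
      obtain ⟨π, hπ, hc⟩ := exists_unbar obs₂ πB hB
      exact (iInf_le _ ⟨π, hπ⟩).trans (main_eq hPr hPrB s hσ hc φ hφ).le
    · refine le_iInf fun ⟨π, hπ⟩ => ?_
      obtain ⟨πB, hB, hc⟩ := exists_bar (A₁ := A₁) (A₂ := A₂) obs₂ π hπ
      exact (iInf_le _ ⟨πB, hB⟩).trans (main_eq hPr hPrB s hσ hc φ hφ).ge
  have hval : val Pr obs₁ obs₂ φ s =
      val PrB (barObs obs₁) (barObs obs₂) (barφ φ) (Sum.inl s) := by
    unfold val
    apply le_antisymm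
    · refine iSup_le fun ⟨σ, hσ⟩ => ?_
      obtain ⟨σB, hB, hc⟩ := exists_bar (A₁ := A₁) (A₂ := A₂) obs₁ σ hσ
      exact (hinf σ σB hc).le.trans (le_iSup (fun σ : {σ // ObsBased (barObs obs₁) σ} =>
        ⨅ π : {π : List (BarS S A₁ A₂) → PMF A₂ // ObsBased (barObs obs₂) π},
            PrB (Sum.inl s) σ.1 π.1 (barφ φ)) ⟨σB, hB⟩)
    · refine iSup_le fun ⟨σB, hB⟩ => ?_
      obtain ⟨σ, hσ, hc⟩ := exists_unbar obs₁ σB hB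
      exact (hinf σ σB hc).ge.trans (le_iSup (fun σ : {σ // ObsBased obs₁ σ} =>
        ⨅ π : {π : List S → PMF A₂ // ObsBased obs₂ π}, Pr s σ.1 π.1 φ) ⟨σ, hσ⟩)
  refine ⟨hval, ?_, ?_⟩
  · rintro ⟨σ, hσ, h⟩
    obtain ⟨σB, hB, hc⟩ := exists_bar (A₁ := A₁) (A₂ := A₂) obs₁ σ hσ
    exact ⟨σB, hB, by rw [← hinf σ σB hc, h, hval]⟩
  · rintro ⟨σB, hB, h⟩
    obtain ⟨σ, hσ, hc⟩ := exists_unbar obs₁ σB hB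
    exact ⟨σ, hσ, by rw [hinf σ σB hc, h, hval]⟩

end Stmt1
end

section
/- Let G = (S, A₁, A₂, δ) be a complete-observation concurrent stochastic game with a distinguished state s* and a tuple (s₀, …, s_{n−1}) ∈ Sⁿ (n ≥ 1, indices in ZMod n) such that δ(s*, a, b)(t) = #{k : s_k = t}/n for all a ∈ A₁, b ∈ A₂ (s* is a uniform-n-ary probabilistic state). Let f : A₁ → ZMod n and g : A₂ → ZMod n be surjective, and let G' be the game identical to G except that δ'(s*, a, b) is the Dirac distribution at s_{f(a)+g(b)}. Then for every measurable objective φ ⊆ S^ω and every state s ∈ S, val_G(φ)(s) = val_{G'}(φ)(s); moreover player 1 has an optimal strategy for φ from s in G if and only if player 1 has an optimal strategy for φ from s in G'. -/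
open MeasureTheory
open scoped ENNReal

namespace Stmt3

variable {S A₁ A₂ : Type}

/-- The cylinder set of infinite plays extending the finite prefix `l`. -/
def Cyl (l : List S) : Set (ℕ → S) := {ρ | ∀ i : Fin l.length, ρ i.1 = l.get i}

/-- Probability of observing the successive states `rest` after the history `hist ++ [cur]`,
when the players draw their actions independently according to `σ` and `π`, and successor
states are drawn according to `δ`. -/
noncomputable def listProb [Fintype A₁] [Fintype A₂] (δ : S → A₁ → A₂ → PMF S)
    (σ : List S → PMF A₁) (π : List S → PMF A₂) :
    List S → S → List S → ℝ≥0∞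
  | _, _, [] => 1
  | hist, cur, s' :: rest =>
      (∑' a, ∑' b, σ (hist ++ [cur]) a * π (hist ++ [cur]) b * δ cur a b s') *
        listProb δ σ π (hist ++ [cur]) s' rest

/-- `Pr` is the family of Ionescu–Tulcea play measures of the concurrent game `δ`. -/
def IsPlayMeasure [Fintype A₁] [Fintype A₂] [MeasurableSpace S] (δ : S → A₁ → A₂ → PMF S)
    (Pr : S → (List S → PMF A₁) → (List S → PMF A₂) → Measure (ℕ → S)) : Prop :=
  (∀ s σ π, IsProbabilityMeasure (Pr s σ π)) ∧
    ∀ s σ π (l : List S), Pr s σ π (Cyl (s :: l)) = listProb δ σ π [] s l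

theorem step_eq_bind [Fintype A₁] [Fintype A₂] (p : PMF A₁) (q : PMF A₂)
    (d : A₁ → A₂ → PMF S) (t : S) :
    (∑' a, ∑' b, p a * q b * d a b t) = (p.bind fun a => q.bind fun b => d a b) t := by
  simp only [PMF.bind_apply, ← ENNReal.tsum_mul_left, mul_assoc]

theorem unif_shift (n : ℕ) [NeZero n] (h : ZMod n → S) (e : ZMod n ≃ ZMod n) :
    (PMF.uniformOfFintype (ZMod n)).bind (fun k => PMF.pure (h (e k))) =
      (PMF.uniformOfFintype (ZMod n)).bind (fun k => PMF.pure (h k)) := by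
  ext t
  simp only [PMF.bind_apply, PMF.uniformOfFintype_apply]
  exact e.tsum_eq (fun k => ((Fintype.card (ZMod n) : ℝ≥0∞))⁻¹ * (PMF.pure (h k)) t)

theorem listProb_congr [Fintype A₁] [Fintype A₂] (δ δ' : S → A₁ → A₂ → PMF S)
    (σ σ' : List S → PMF A₁) (π π' : List S → PMF A₂)
    (h : ∀ hist cur, ((σ (hist ++ [cur])).bind fun a => (π (hist ++ [cur])).bind fun b =>
        δ cur a b) =
      (σ' (hist ++ [cur])).bind fun a => (π' (hist ++ [cur])).bind fun b => δ' cur a b)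
    (l : List S) : ∀ hist cur,
    listProb δ σ π hist cur l = listProb δ' σ' π' hist cur l := by
  induction l with
  | nil => intro hist cur; simp [listProb]
  | cons t l ih =>
    intro hist cur
    simp only [listProb]
    rw [ih, step_eq_bind, step_eq_bind, h]

theorem Cyl_measurable [MeasurableSpace S] [DiscreteMeasurableSpace S] (l : List S) :
    MeasurableSet (Cyl l) := by
  have : Cyl l = ⋂ i : Fin l.length, (fun ρ : ℕ → S => ρ i.1) ⁻¹' {l.get i} := by
    ext ρ; simp [Cyl]
  rw [this]
  exact MeasurableSet.iInter fun i => measurable_pi_apply _ (MeasurableSet.of_discrete)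

theorem Cyl_inter {l m : List S} {x : ℕ → S} (hl : x ∈ Cyl l) (hm : x ∈ Cyl m)
    (hlen : l.length ≤ m.length) : Cyl m ⊆ Cyl l := by
  intro ρ hρ i
  have h1 := hρ ⟨i.1, i.2.trans_le hlen⟩
  have h2 := hm ⟨i.1, i.2.trans_le hlen⟩
  have h3 := hl i
  simp only at h1 h2 h3
  rw [h1, ← h2, h3]

theorem Cyl_generate [Fintype S] [MeasurableSpace S] [DiscreteMeasurableSpace S] :
    (MeasurableSpace.pi : MeasurableSpace (ℕ → S)) =
      MeasurableSpace.generateFrom (Set.range (Cyl (S := S))) := by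
  apply le_antisymm
  · refine iSup_le fun i => ?_
    rintro B ⟨A, -, rfl⟩
    have : (fun ρ : ℕ → S => ρ i) ⁻¹' A =
        ⋃ l ∈ {l : List S | Cyl l ⊆ (fun ρ : ℕ → S => ρ i) ⁻¹' A}, Cyl l := by
      ext ρ
      simp only [Set.mem_iUnion, Set.mem_ofPred_eq, exists_prop]
      constructor
      · intro hρ
        refine ⟨List.ofFn (fun j : Fin (i+1) => ρ j), ?_, ?_⟩
        · intro ρ' h'
          have := h' ⟨i, by simp⟩
          simp only [List.get_ofFn] at this
          change ρ' i ∈ A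
          rw [this]
          exact hρ
        · intro j
          simp only [List.get_ofFn]
          rfl
      · rintro ⟨l, h1, h2⟩
        exact h1 h2
    rw [this]
    exact MeasurableSet.biUnion (Set.to_countable _) fun l _ =>
      MeasurableSpace.measurableSet_generateFrom ⟨l, rfl⟩
  · apply MeasurableSpace.generateFrom_le
    rintro _ ⟨l, rfl⟩
    exact Cyl_measurable l

theorem measure_eq [Fintype S] [MeasurableSpace S] [DiscreteMeasurableSpace S] (s : S)
    (μ ν : Measure (ℕ → S)) [IsProbabilityMeasure μ] [IsProbabilityMeasure ν]
    (hμ : μ (Cyl [s]) = 1) (h : ∀ l, μ (Cyl (s :: l)) = ν (Cyl (s :: l))) : μ = ν := by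
  refine ext_of_generate_finite _ Cyl_generate ?_ ?_ (by simp)
  · rintro _ ⟨l, rfl⟩ _ ⟨m, rfl⟩ ⟨x, hl, hm⟩
    rcases le_total l.length m.length with hlen | hlen
    · rw [Set.inter_eq_right.2 (Cyl_inter hl hm hlen)]; exact ⟨m, rfl⟩
    · rw [Set.inter_eq_left.2 (Cyl_inter hm hl hlen)]; exact ⟨l, rfl⟩
  · rintro _ ⟨l, rfl⟩
    cases l with
    | nil =>
      have : Cyl ([] : List S) = Set.univ := by ext ρ; simp [Cyl]
      simp [this]
    | cons t l =>
      by_cases hts : t = s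
      · subst hts; exact h l
      · have key : ∀ (κ : Measure (ℕ → S)) [IsProbabilityMeasure κ], κ (Cyl [s]) = 1 →
            κ (Cyl (t :: l)) = 0 := by
          intro κ _ hκ
          have h0 : κ (Cyl [s])ᶜ = 0 := (prob_compl_eq_zero_iff (Cyl_measurable _)).2 hκ
          refine measure_mono_null ?_ h0
          intro ρ hρ hρ'
          have h1 := hρ ⟨0, by simp⟩
          have h2 := hρ' ⟨0, by simp⟩
          simp at h1 h2
          exact hts (h1.symm.trans h2)
        rw [key μ hμ, key ν (by rw [← h, hμ])]

theorem play_eq [Fintype S] [Fintype A₁] [Fintype A₂] [MeasurableSpace S]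
    [DiscreteMeasurableSpace S] (δ δ' : S → A₁ → A₂ → PMF S)
    (Pr Pr' : S → (List S → PMF A₁) → (List S → PMF A₂) → Measure (ℕ → S))
    (hPr : IsPlayMeasure δ Pr) (hPr' : IsPlayMeasure δ' Pr') (s : S)
    (σ σ' : List S → PMF A₁) (π π' : List S → PMF A₂)
    (h : ∀ hist cur, ((σ (hist ++ [cur])).bind fun a => (π (hist ++ [cur])).bind fun b =>
        δ cur a b) =
      (σ' (hist ++ [cur])).bind fun a => (π' (hist ++ [cur])).bind fun b => δ' cur a b) :
    Pr s σ π = Pr' s σ' π' := by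
  have := hPr.1 s σ π
  have := hPr'.1 s σ' π'
  refine measure_eq s _ _ ?_ ?_
  · rw [hPr.2]; simp [listProb]
  · intro l
    rw [hPr.2, hPr'.2]
    exact listProb_congr δ δ' σ σ' π π' h l [] s

theorem stmt_3 {S A₁ A₂ : Type} [Fintype S] [Nonempty S] [DecidableEq S]
    [Fintype A₁] [Nonempty A₁] [Fintype A₂] [Nonempty A₂]
    [MeasurableSpace S] [DiscreteMeasurableSpace S]
    (n : ℕ) [NeZero n]
    (δ δ' : S → A₁ → A₂ → PMF S) (sStar : S) (sTup : ZMod n → S)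
    -- `sStar` is a uniform-`n`-ary probabilistic state of `G` with successor tuple `sTup`:
    (hδ : ∀ (a : A₁) (b : A₂) (t : S), δ sStar a b t =
      ((Finset.univ.filter fun k : ZMod n => sTup k = t).card : ℝ≥0∞) / (n : ℝ≥0∞))
    (f : A₁ → ZMod n) (g : A₂ → ZMod n)
    (hf : Function.Surjective f) (hg : Function.Surjective g)
    -- `G'` is identical to `G` except that `δ'(s*, a, b)` is Dirac at `sTup (f a + g b)`:
    (hδ' : ∀ (a : A₁) (b : A₂), δ' sStar a b = PMF.pure (sTup (f a + g b)))
    (hsame : ∀ s, s ≠ sStar → δ' s = δ s)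
    (φ : Set (ℕ → S)) (hφ : MeasurableSet φ)
    (Pr Pr' : S → (List S → PMF A₁) → (List S → PMF A₂) → Measure (ℕ → S))
    (hPr : IsPlayMeasure δ Pr) (hPr' : IsPlayMeasure δ' Pr')
    (s : S) :
    (⨆ σ : List S → PMF A₁, ⨅ π : List S → PMF A₂, Pr s σ π φ) =
      (⨆ σ : List S → PMF A₁, ⨅ π : List S → PMF A₂, Pr' s σ π φ) ∧
    ((∃ σ : List S → PMF A₁, (⨅ π : List S → PMF A₂, Pr s σ π φ) =
        ⨆ σ' : List S → PMF A₁, ⨅ π : List S → PMF A₂, Pr s σ' π φ) ↔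
      (∃ σ : List S → PMF A₁, (⨅ π : List S → PMF A₂, Pr' s σ π φ) =
        ⨆ σ' : List S → PMF A₁, ⨅ π : List S → PMF A₂, Pr' s σ' π φ)) := by
  classical
  set Q : PMF S := (PMF.uniformOfFintype (ZMod n)).bind (fun k => PMF.pure (sTup k)) with hQ
  have hδQ : ∀ a b, δ sStar a b = Q := by
    intro a b
    ext t
    rw [hδ, hQ]
    simp only [PMF.bind_apply, PMF.uniformOfFintype_apply, PMF.pure_apply, tsum_fintype,
      ← Finset.mul_sum, ZMod.card]
    rw [ENNReal.div_eq_inv_mul, Finset.card_filter, Nat.cast_sum]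
    congr 1
    refine Finset.sum_congr rfl fun k _ => ?_
    by_cases hk : sTup k = t
    · simp [hk]
    · simp [hk, Ne.symm hk]
  set U₁ : PMF A₁ := (PMF.uniformOfFintype (ZMod n)).map (Function.surjInv hf) with hU₁
  set U₂ : PMF A₂ := (PMF.uniformOfFintype (ZMod n)).map (Function.surjInv hg) with hU₂
  have h1 : ∀ b, (U₁.bind fun a => δ' sStar a b) = Q := by
    intro b
    simp only [hδ', hU₁, PMF.bind_map, Function.comp_def, Function.surjInv_eq]
    exact unif_shift n sTup (Equiv.addRight (g b))
  have h2 : ∀ a, (U₂.bind fun b => δ' sStar a b) = Q := by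
    intro a
    simp only [hδ', hU₂, PMF.bind_map, Function.comp_def, Function.surjInv_eq]
    exact unif_shift n sTup (Equiv.addLeft (f a))
  let E₁ : (List S → PMF A₁) → (List S → PMF A₁) :=
    fun σ h => if h.getLast? = some sStar then U₁ else σ h
  let E₂ : (List S → PMF A₂) → (List S → PMF A₂) :=
    fun π h => if h.getLast? = some sStar then U₂ else π h
  have e1 : ∀ σ π, Pr s σ π = Pr' s (E₁ σ) π := by
    intro σ π
    refine play_eq δ δ' Pr Pr' hPr hPr' s _ _ _ _ ?_
    intro hist cur
    by_cases hc : cur = sStar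
    · subst hc
      simp only [E₁, List.getLast?_concat, if_true, hδQ, PMF.bind_const]
      rw [PMF.bind_comm]
      simp only [h1, PMF.bind_const]
    · simp [E₁, hc, hsame cur hc]
  have e2 : ∀ σ π, Pr s σ π = Pr' s σ (E₂ π) := by
    intro σ π
    refine play_eq δ δ' Pr Pr' hPr hPr' s _ _ _ _ ?_
    intro hist cur
    by_cases hc : cur = sStar
    · subst hc
      simp only [E₂, List.getLast?_concat, if_true, hδQ, PMF.bind_const, h2]
    · simp [E₂, hc, hsame cur hc]
  have i1 : ∀ σ, (⨅ π, Pr s σ π φ) = ⨅ π, Pr' s (E₁ σ) π φ := by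
    intro σ; simp only [e1]
  have i2 : ∀ σ, (⨅ π, Pr' s σ π φ) ≤ ⨅ π, Pr s σ π φ := by
    intro σ
    refine le_iInf fun π => ?_
    rw [e2]
    exact iInf_le _ _
  have hval : (⨆ σ : List S → PMF A₁, ⨅ π : List S → PMF A₂, Pr s σ π φ) =
      (⨆ σ : List S → PMF A₁, ⨅ π : List S → PMF A₂, Pr' s σ π φ) := by
    apply le_antisymm
    · refine iSup_le fun σ => ?_
      rw [i1]
      exact le_iSup (fun σ => ⨅ π, Pr' s σ π φ) (E₁ σ)
    · exact iSup_mono i2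
  refine ⟨hval, ?_, ?_⟩
  · rintro ⟨σ, hσ⟩
    exact ⟨E₁ σ, by rw [← i1, hσ, hval]⟩
  · rintro ⟨σ, hσ⟩
    refine ⟨σ, le_antisymm (le_iSup (fun σ => ⨅ π, Pr s σ π φ) σ) ?_⟩
    rw [hval, ← hσ]
    exact i2 σ
end Stmt3
end

section
/- Let G = (S, A₁, A₂, δ) be a complete-observation concurrent stochastic game with a distinguished state s* and a tuple (s₀, …, s_{n−1}) ∈ Sⁿ (n ≥ 1, indices in ZMod n) such that δ(s*, a, b)(t) = #{k : s_k = t}/n for all a ∈ A₁, b ∈ A₂ (s* is a uniform-n-ary probabilistic state). Let f : A₁ → ZMod n and g : A₂ → ZMod n be surjective, and let G' be the game identical to G except that δ'(s*, a, b) is the Dirac distribution at s_{f(a)+g(b)}. Then for every measurable objective φ ⊆ S^ω and every state s ∈ S: player 1 has an almost-sure winning strategy for φ from s in G if and only if player 1 has an almost-sure winning strategy for φ from s in G'; and player 1 has a positive winning strategy for φ from s in G if and only if player 1 has a positive winning strategy for φ from s in G'. -/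
open MeasureTheory
open scoped ENNReal

namespace Stmt4

variable {S A₁ A₂ : Type}

/-- The cylinder set of infinite plays extending the finite prefix `l`. -/
def Cyl (l : List S) : Set (ℕ → S) := {ρ | ∀ i : Fin l.length, ρ i.1 = l.get i}

/-- Probability of observing the successive states `rest` after the history `hist ++ [cur]`,
when the players draw their actions independently according to `σ` and `π`, and successor
states are drawn according to `δ`. -/
noncomputable def listProb [Fintype A₁] [Fintype A₂] (δ : S → A₁ → A₂ → PMF S)
    (σ : List S → PMF A₁) (π : List S → PMF A₂) :
    List S → S → List S → ℝ≥0∞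
  | _, _, [] => 1
  | hist, cur, s' :: rest =>
      (∑' a, ∑' b, σ (hist ++ [cur]) a * π (hist ++ [cur]) b * δ cur a b s') *
        listProb δ σ π (hist ++ [cur]) s' rest

/-- `Pr` is the family of Ionescu–Tulcea play measures of the concurrent game `δ`. -/
def IsPlayMeasure [Fintype A₁] [Fintype A₂] [MeasurableSpace S] (δ : S → A₁ → A₂ → PMF S)
    (Pr : S → (List S → PMF A₁) → (List S → PMF A₂) → Measure (ℕ → S)) : Prop :=
  (∀ s σ π, IsProbabilityMeasure (Pr s σ π)) ∧
    ∀ s σ π (l : List S), Pr s σ π (Cyl (s :: l)) = listProb δ σ π [] s l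

theorem step_eq [Fintype A₁] [Fintype A₂] (p : PMF A₁) (q : PMF A₂) (d : A₁ → A₂ → PMF S) (t : S) :
    (∑' a, ∑' b, p a * q b * d a b t) = (p.bind fun a => q.bind fun b => d a b) t := by
  simp only [PMF.bind_apply, mul_assoc, ENNReal.tsum_mul_left]

theorem listProb_congr [Fintype A₁] [Fintype A₂] (δ δ' : S → A₁ → A₂ → PMF S)
    (σ σ' : List S → PMF A₁) (π π' : List S → PMF A₂)
    (h : ∀ hist cur, ((σ (hist ++ [cur])).bind fun a => (π (hist ++ [cur])).bind fun b => δ cur a b)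
      = ((σ' (hist ++ [cur])).bind fun a => (π' (hist ++ [cur])).bind fun b => δ' cur a b))
    (l : List S) : ∀ hist cur, listProb δ σ π hist cur l = listProb δ' σ' π' hist cur l := by
  induction l with
  | nil => intro _ _; rfl
  | cons x l ih =>
    intro hist cur
    simp only [listProb, step_eq, h, ih]

/-- The plays agreeing with `ρ` on the first `k` positions. -/
def Agree (ρ : ℕ → S) (k : ℕ) : Set (ℕ → S) := {ρ' | ∀ i < k, ρ' i = ρ i}

theorem agree_eq_cyl (ρ : ℕ → S) (k : ℕ) :
    Agree ρ (k + 1) = Cyl (ρ 0 :: List.ofFn fun i : Fin k => ρ (i + 1)) := by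
  ext ρ'
  simp only [Agree, Cyl, Set.mem_setOf_eq]
  constructor
  · rintro h ⟨i, hi⟩
    simp at hi
    rw [h i (by omega)]
    cases i <;> simp
  · intro h i hi
    have := h ⟨i, by simpa using hi⟩
    rw [this]
    cases i <;> simp

theorem measure_ext [Fintype S] [MeasurableSpace S] [DiscreteMeasurableSpace S]
    (μ ν : Measure (ℕ → S)) [IsProbabilityMeasure μ] [IsProbabilityMeasure ν] (s : S)
    (h : ∀ l, μ (Cyl (s :: l)) = ν (Cyl (s :: l)))
    (h1 : μ (Cyl [s]) = 1) : μ = ν := by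
  have hmA : ∀ (ρ : ℕ → S) k, MeasurableSet (Agree ρ k) := by
    intro ρ k
    have : Agree ρ k = ⋂ i ∈ Set.Iio k, (fun ρ' : ℕ → S => ρ' i) ⁻¹' {ρ i} := by
      ext; simp [Agree]
    rw [this]
    exact MeasurableSet.biInter (Set.to_countable _) fun i _ =>
      measurable_pi_apply i (MeasurableSet.of_discrete)
  have hz : ∀ (κ : Measure (ℕ → S)) [IsProbabilityMeasure κ], κ (Cyl [s]) = 1 →
      ∀ ρ k, ρ 0 ≠ s → κ (Agree ρ (k + 1)) = 0 := by
    intro κ _ hκ ρ k hρ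
    have hc : Cyl [s] = Agree (fun _ => s) 1 := by rw [agree_eq_cyl]; simp
    have hm : MeasurableSet (Cyl [s]) := hc ▸ hmA _ _
    refine measure_mono_null ?_ ((prob_compl_eq_zero_iff hm).2 hκ)
    intro ρ' hρ' hmem
    rw [hc] at hmem
    exact hρ ((hρ' 0 (by omega)).symm.trans (hmem 0 (by omega)))
  refine ext_of_generate_finite {A | ∃ ρ k, A = Agree ρ k} ?_ ?_ ?_ (by simp)
  · apply le_antisymm
    · refine iSup_le fun i => ?_
      rintro _ ⟨t, -, rfl⟩
      have : (fun ρ' : ℕ → S => ρ' i) ⁻¹' t = ⋃ w : {w : Fin (i + 1) → S // w (Fin.last i) ∈ t},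
          Agree (fun j => if hj : j < i + 1 then w.1 ⟨j, hj⟩ else s) (i + 1) := by
        ext ρ
        simp only [Set.mem_preimage, Set.mem_iUnion, Agree, Set.mem_setOf_eq]
        constructor
        · intro hρ
          refine ⟨⟨fun j => ρ j, by simpa using hρ⟩, fun j hj => by simp [hj]⟩
        · rintro ⟨w, hw⟩
          rw [hw i (by omega)]
          rw [dif_pos (Nat.lt_succ_self i)]
          exact w.2
      rw [this]
      exact MeasurableSet.iUnion fun w => MeasurableSpace.measurableSet_generateFrom ⟨_, _, rfl⟩
    · refine MeasurableSpace.generateFrom_le ?_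
      rintro _ ⟨ρ, k, rfl⟩
      exact hmA ρ k
  · rintro _ ⟨ρ, k, rfl⟩ _ ⟨ρ', k', rfl⟩ ⟨x, hx, hx'⟩
    refine ⟨x, max k k', ?_⟩
    ext y
    simp only [Agree, Set.mem_inter_iff, Set.mem_setOf_eq] at *
    constructor
    · rintro ⟨h1, h2⟩ i hi
      rcases lt_max_iff.1 hi with h | h
      · rw [h1 i h, hx i h]
      · rw [h2 i h, hx' i h]
    · intro hy
      exact ⟨fun i hi => by rw [hy i (by simp [hi]), hx i hi],
        fun i hi => by rw [hy i (by simp [hi]), hx' i hi]⟩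
  · rintro _ ⟨ρ, k, rfl⟩
    cases k with
    | zero =>
      have : Agree ρ 0 = Set.univ := by ext; simp [Agree]
      simp [this]
    | succ k =>
      by_cases hρ : ρ 0 = s
      · rw [agree_eq_cyl, hρ, h]
      · rw [hz μ h1 ρ k hρ, hz ν (h [] ▸ h1) ρ k hρ]

theorem unif_shift [DecidableEq S] (n : ℕ) [NeZero n] (sTup : ZMod n → S) (e : ZMod n ≃ ZMod n) (t : S) :
    ((PMF.uniformOfFintype (ZMod n)).bind fun k => PMF.pure (sTup (e k))) t =
      ((Finset.univ.filter fun k : ZMod n => sTup k = t).card : ℝ≥0∞) / (n : ℝ≥0∞) := by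
  rw [PMF.bind_apply, tsum_fintype]
  simp only [PMF.uniformOfFintype_apply, PMF.pure_apply, ZMod.card]
  have h := Equiv.sum_comp e fun k => (n : ℝ≥0∞)⁻¹ * if sTup k = t then 1 else 0
  rw [← Finset.mul_sum (f := fun k => if sTup k = t then (1 : ℝ≥0∞) else 0), Finset.sum_boole] at h
  rw [ENNReal.div_eq_inv_mul, ← h]
  refine Finset.sum_congr rfl fun k _ => ?_
  by_cases hk : sTup (e k) = t
  · rw [if_pos hk, if_pos hk.symm]
  · rw [if_neg hk, if_neg (Ne.symm hk)]

theorem stmt_4 {S A₁ A₂ : Type} [Fintype S] [Nonempty S] [DecidableEq S]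
    [Fintype A₁] [Nonempty A₁] [Fintype A₂] [Nonempty A₂]
    [MeasurableSpace S] [DiscreteMeasurableSpace S]
    (n : ℕ) [NeZero n]
    (δ δ' : S → A₁ → A₂ → PMF S) (sStar : S) (sTup : ZMod n → S)
    -- `sStar` is a uniform-`n`-ary probabilistic state of `G` with successor tuple `sTup`:
    (hδ : ∀ (a : A₁) (b : A₂) (t : S), δ sStar a b t =
      ((Finset.univ.filter fun k : ZMod n => sTup k = t).card : ℝ≥0∞) / (n : ℝ≥0∞))
    (f : A₁ → ZMod n) (g : A₂ → ZMod n)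
    (hf : Function.Surjective f) (hg : Function.Surjective g)
    -- `G'` is identical to `G` except that `δ'(s*, a, b)` is Dirac at `sTup (f a + g b)`:
    (hδ' : ∀ (a : A₁) (b : A₂), δ' sStar a b = PMF.pure (sTup (f a + g b)))
    (hsame : ∀ s, s ≠ sStar → δ' s = δ s)
    (φ : Set (ℕ → S)) (hφ : MeasurableSet φ)
    (Pr Pr' : S → (List S → PMF A₁) → (List S → PMF A₂) → Measure (ℕ → S))
    (hPr : IsPlayMeasure δ Pr) (hPr' : IsPlayMeasure δ' Pr')
    (s : S) :
    ((∃ σ : List S → PMF A₁, ∀ π : List S → PMF A₂, Pr s σ π φ = 1) ↔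
      (∃ σ : List S → PMF A₁, ∀ π : List S → PMF A₂, Pr' s σ π φ = 1)) ∧
    ((∃ σ : List S → PMF A₁, ∀ π : List S → PMF A₂, 0 < Pr s σ π φ) ↔
      (∃ σ : List S → PMF A₁, ∀ π : List S → PMF A₂, 0 < Pr' s σ π φ)) := by
  classical
  obtain ⟨rf, hrf⟩ := hf.hasRightInverse
  obtain ⟨rg, hrg⟩ := hg.hasRightInverse
  let U := PMF.uniformOfFintype (ZMod n)
  have key : ∀ (σ σ' : List S → PMF A₁) (π π' : List S → PMF A₂),
      (∀ hist cur, ((σ (hist ++ [cur])).bind fun a => (π (hist ++ [cur])).bind fun b => δ cur a b)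
      = ((σ' (hist ++ [cur])).bind fun a => (π' (hist ++ [cur])).bind fun b => δ' cur a b)) →
      Pr s σ π = Pr' s σ' π' := by
    intro σ σ' π π' h
    haveI := hPr.1 s σ π
    haveI := hPr'.1 s σ' π'
    refine measure_ext _ _ s (fun l => ?_) ?_
    · rw [hPr.2, hPr'.2]
      exact listProb_congr δ δ' σ σ' π π' h l [] s
    · rw [hPr.2]; rfl
  -- the uniform successor distribution at `sStar`
  obtain ⟨D, hD⟩ : ∃ D : PMF S, ∀ e : ZMod n ≃ ZMod n,
      (U.bind fun k => PMF.pure (sTup (e k))) = D :=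
    ⟨U.bind fun k => PMF.pure (sTup (Equiv.refl _ k)), fun e => by
      ext t; rw [unif_shift, unif_shift]⟩
  have hDδ : ∀ a b, δ sStar a b = D := by
    intro a b
    ext t
    rw [hδ, ← hD (Equiv.refl _), unif_shift]
  have fwd : ∀ σ : List S → PMF A₁, ∃ σ' : List S → PMF A₁, ∀ π, Pr s σ π = Pr' s σ' π := by
    intro σ
    refine ⟨fun h => if h.getLast? = some sStar then U.map rf else σ h, fun π => key _ _ _ _ ?_⟩
    intro hist cur
    by_cases hc : cur = sStar
    · subst hc
      simp only [List.getLast?_concat, if_true, hDδ, hδ', PMF.bind_const, PMF.bind_map]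
      simp only [Function.comp_def, hrf _]
      rw [PMF.bind_comm]
      have : ∀ b, (U.bind fun k => PMF.pure (sTup (k + g b))) = D := fun b => hD (Equiv.addRight (g b))
      simp only [this, PMF.bind_const]
    · simp [hc, hsame cur hc]
  have bwd : ∀ (σ : List S → PMF A₁) (π : List S → PMF A₂), ∃ π', Pr s σ π = Pr' s σ π' := by
    intro σ π
    refine ⟨fun h => if h.getLast? = some sStar then U.map rg else π h, key _ _ _ _ ?_⟩
    intro hist cur
    by_cases hc : cur = sStar
    · subst hc
      simp only [List.getLast?_concat, if_true, hDδ, hδ', PMF.bind_const, PMF.bind_map]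
      simp only [Function.comp_def, hrg _]
      have : ∀ a, (U.bind fun k => PMF.pure (sTup (f a + k))) = D := fun a => hD (Equiv.addLeft (f a))
      simp only [this, PMF.bind_const]
    · simp [hc, hsame cur hc]
  have main : ∀ Q : ℝ≥0∞ → Prop, (∃ σ : List S → PMF A₁, ∀ π : List S → PMF A₂, Q (Pr s σ π φ)) ↔
      (∃ σ : List S → PMF A₁, ∀ π : List S → PMF A₂, Q (Pr' s σ π φ)) := by
    intro Q
    constructor
    · rintro ⟨σ, h⟩
      obtain ⟨σ', h'⟩ := fwd σ
      exact ⟨σ', fun π => h' π ▸ h π⟩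
    · rintro ⟨σ, h⟩
      refine ⟨σ, fun π => ?_⟩
      obtain ⟨π', h'⟩ := bwd σ π
      exact h' ▸ h π'
  exact ⟨main (· = 1), main (0 < ·)⟩

end Stmt4
end

section
/- Let (S, A, δ, obs) be a POMDP, let s* be an initial state, and let φ ⊆ S^ω be a measurable objective. Then for every randomized observation-based strategy σ there exists a pure observation-based strategy σ_P such that Pr_{s*}^σ(φ) ≤ Pr_{s*}^{σ_P}(φ). -/
/-!
STATEMENT 7: In a POMDP, for every randomized observation-based strategy σ there is a
pure observation-based strategy σ_P with Pr_{s*}^σ(φ) ≤ Pr_{s*}^{σ_P}(φ).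

The Ionescu–Tulcea play measure `Pr s σ` is axiomatized by its characteristic property:
it is the (unique) probability measure on plays whose cylinder probabilities are given by
the recursive product formula `listProb`.
-/

open MeasureTheory
open scoped ENNReal

namespace Stmt7

variable {S A O : Type}

/-- The cylinder set of infinite plays extending the finite prefix `l`. -/
def Cyl (l : List S) : Set (ℕ → S) := {ρ | ∀ i : Fin l.length, ρ i.1 = l.get i}

/-- Probability of observing the successive states `rest` after the history `hist ++ [cur]`,
when actions are drawn according to the strategy `σ` and states according to `δ`. -/
noncomputable def listProb [Fintype A] (δ : S → A → PMF S) (σ : List S → PMF A) :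
    List S → S → List S → ℝ≥0∞
  | _, _, [] => 1
  | hist, cur, s' :: rest =>
      (∑' a, σ (hist ++ [cur]) a * δ cur a s') * listProb δ σ (hist ++ [cur]) s' rest

/-- `Pr` is the family of Ionescu–Tulcea play measures of the POMDP with transitions `δ`:
`Pr s σ` is a probability measure on `S^ω` (product σ-algebra, `S` discrete), and the
probability of the cylinder of plays starting with `s :: l` is the product of the
one-step transition probabilities under the strategy `σ`. -/
def IsPlayMeasure [Fintype A] [MeasurableSpace S] (δ : S → A → PMF S)
    (Pr : S → (List S → PMF A) → Measure (ℕ → S)) : Prop :=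
  (∀ s σ, IsProbabilityMeasure (Pr s σ)) ∧
    ∀ s σ (l : List S), Pr s σ (Cyl (s :: l)) = listProb δ σ [] s l

/-- A strategy is observation-based if it only depends on the observation sequence. -/
def ObsBased (obs : S → O) (σ : List S → PMF A) : Prop :=
  ∀ h h' : List S, h.map obs = h'.map obs → σ h = σ h'

/-- A strategy is pure if it always plays a Dirac distribution. -/
def IsPure (σ : List S → PMF A) : Prop := ∀ h, ∃ a, σ h = PMF.pure a

theorem mem_Cyl {l : List S} {ρ : ℕ → S} :
    ρ ∈ Cyl l ↔ ∀ i (h : i < l.length), ρ i = l[i] := by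
  constructor
  · intro hρ i h
    exact hρ ⟨i, h⟩
  · intro hρ i
    exact hρ i.1 i.2

theorem isPiSystem_Cyl : IsPiSystem (Set.range (Cyl : List S → Set (ℕ → S))) := by
  have key : ∀ l l' : List S, l.length ≤ l'.length → (Cyl l ∩ Cyl l').Nonempty →
      Cyl l ∩ Cyl l' = Cyl l' := by
    rintro l l' hl ⟨ρ, h1, h2⟩
    rw [Set.inter_eq_right]
    intro ρ' h3
    rw [mem_Cyl] at *
    intro i hi
    rw [h3 i (by omega), ← h2 i (by omega), h1 i hi]
  rintro _ ⟨l, rfl⟩ _ ⟨l', rfl⟩ hne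
  rcases le_total l.length l'.length with h | h
  · exact ⟨l', (key l l' h hne).symm⟩
  · rw [Set.inter_comm] at hne ⊢
    exact ⟨l, (key l' l h hne).symm⟩

theorem generateFrom_Cyl [Finite S] [MeasurableSpace S] [DiscreteMeasurableSpace S] :
    (MeasurableSpace.pi : MeasurableSpace (ℕ → S)) =
      MeasurableSpace.generateFrom (Set.range (Cyl : List S → Set (ℕ → S))) := by
  apply le_antisymm
  · rw [MeasurableSpace.pi]
    refine iSup_le fun n => ?_
    rintro _ ⟨t, -, rfl⟩
    have : (fun b : ℕ → S => b n) ⁻¹' t =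
        ⋃ l ∈ {l : List S | ∃ h : n < l.length, l[n] ∈ t}, Cyl l := by
      ext ρ
      simp only [Set.mem_preimage, Set.mem_iUnion]
      constructor
      · intro h
        refine ⟨(List.range (n+1)).map ρ, ⟨by simp, by simpa using h⟩, ?_⟩
        rw [mem_Cyl]
        intro i hi
        simp
      · rintro ⟨l, ⟨h1, h2⟩, h3⟩
        rw [mem_Cyl] at h3
        rw [h3 n h1]
        exact h2
    rw [this]
    refine MeasurableSet.biUnion (Set.to_countable _) fun l _ => ?_
    exact MeasurableSpace.measurableSet_generateFrom ⟨l, rfl⟩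
  · refine MeasurableSpace.generateFrom_le ?_
    rintro _ ⟨l, rfl⟩
    have : Cyl l = ⋂ i : Fin l.length, (fun ρ : ℕ → S => ρ i.1) ⁻¹' {l.get i} := by
      ext ρ
      simp [Cyl]
    rw [this]
    exact MeasurableSet.iInter fun i => measurable_pi_apply _ (MeasurableSet.of_discrete)

/-- The pure strategy attached to a choice function on observation sequences. -/
noncomputable def pureStrat (obs : S → O) (f : List O → A) : List S → PMF A :=
  fun h => PMF.pure (f (h.map obs))

theorem listProb_factor [Fintype A] (δ : S → A → PMF S) (obs : S → O)
    (τ : List O → PMF A) (rest : List S) : ∀ (hist : List S) (cur : S),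
    ∃ (F : Finset (List O)) (G : List O → A → ℝ≥0∞),
      (∀ w ∈ F, hist.length < w.length) ∧
      (∀ f : List O → A, listProb δ (pureStrat obs f) hist cur rest = ∏ w ∈ F, G w (f w)) ∧
      listProb δ (fun h => τ (h.map obs)) hist cur rest = ∏ w ∈ F, ∑ a, τ w a * G w a := by
  classical
  induction rest with
  | nil => intro hist cur; exact ⟨∅, fun _ _ => 0, by simp, by simp [listProb], by simp [listProb]⟩
  | cons s' rest ih =>
    intro hist cur
    obtain ⟨F, G, h1, h2, h3⟩ := ih (hist ++ [cur]) s'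
    have hw : (hist ++ [cur]).map obs ∉ F := by
      intro h
      have := h1 _ h
      simp at this
    have hne : ∀ w ∈ F, w ≠ (hist ++ [cur]).map obs := fun w hwF h => hw (h ▸ hwF)
    refine ⟨insert ((hist ++ [cur]).map obs) F,
      Function.update G ((hist ++ [cur]).map obs) (fun a => δ cur a s'), ?_, ?_, ?_⟩
    · intro w hwF
      rcases Finset.mem_insert.1 hwF with rfl | h
      · simp
      · have := h1 w h
        simp at this
        omega
    · intro f
      rw [listProb, h2, Finset.prod_insert hw, Function.update_self]
      congr 1
      · rw [tsum_eq_single (f ((hist ++ [cur]).map obs))]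
        · simp [pureStrat]
        · intro a ha
          simp only [pureStrat, PMF.pure_apply, if_neg ha, zero_mul]
      · exact Finset.prod_congr rfl fun w hwF => by rw [Function.update_of_ne (hne w hwF)]
    · rw [listProb, h3, Finset.prod_insert hw, Function.update_self, tsum_fintype]
      congr 1
      exact Finset.prod_congr rfl fun w hwF => by rw [Function.update_of_ne (hne w hwF)]

theorem stmt_7 {S A O : Type} [Fintype S] [Nonempty S] [Fintype A] [Nonempty A] [Fintype O]
    [MeasurableSpace S] [DiscreteMeasurableSpace S]
    (δ : S → A → PMF S) (obs : S → O)
    (Pr : S → (List S → PMF A) → Measure (ℕ → S)) (hPr : IsPlayMeasure δ Pr)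
    (sStar : S) (φ : Set (ℕ → S)) (hφ : MeasurableSet φ)
    (σ : List S → PMF A) (hσ : ObsBased obs σ) :
    ∃ σP : List S → PMF A, IsPure σP ∧ ObsBased obs σP ∧
      Pr sStar σ φ ≤ Pr sStar σP φ := by
  classical
  letI : MeasurableSpace A := ⊤
  haveI : DiscreteMeasurableSpace A := ⟨fun _ => trivial⟩
  haveI := hPr.1
  -- factor the strategy through observations
  obtain ⟨τ, hτ⟩ : ∃ τ : List O → PMF A, σ = fun h => τ (h.map obs) := by
    refine ⟨fun w => if h : ∃ l : List S, l.map obs = w then σ h.choose else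
      PMF.pure (Classical.arbitrary A), ?_⟩
    funext h
    have hex : ∃ l : List S, l.map obs = h.map obs := ⟨h, rfl⟩
    simp only [dif_pos hex]
    exact hσ _ _ hex.choose_spec.symm
  let P : Measure (List O → A) := Measure.infinitePi (fun w => (τ w).toMeasure)
  have hne : ∀ (ν : List S → PMF A) (s' : S) (l : List S), s' ≠ sStar →
      Pr sStar ν (Cyl (s' :: l)) = 0 := by
    intro ν s' l hs
    have h1 : Pr sStar ν (Cyl [sStar]) = 1 := by rw [hPr.2]; rfl
    have hm : MeasurableSet (Cyl [sStar] : Set (ℕ → S)) := by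
      rw [generateFrom_Cyl]
      exact MeasurableSpace.measurableSet_generateFrom ⟨_, rfl⟩
    refine measure_mono_null ?_ ((prob_compl_eq_zero_iff hm).2 h1)
    intro ρ hρ h2
    rw [mem_Cyl] at hρ h2
    have a1 := hρ 0 (by simp)
    have a2 := h2 0 (by simp)
    simp at a1 a2
    exact hs (a1.symm.trans a2)
  have hnil : (Cyl [] : Set (ℕ → S)) = Set.univ := by
    ext ρ
    simp [mem_Cyl]
  have hmeas : Measurable fun f : List O → A => Pr sStar (pureStrat obs f) := by
    refine Measurable.measure_of_isPiSystem_of_isProbabilityMeasure generateFrom_Cyl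
      isPiSystem_Cyl ?_
    rintro _ ⟨l, rfl⟩
    match l with
    | [] => simp [hnil]
    | s' :: l =>
      by_cases hs : s' = sStar
      · subst hs
        obtain ⟨F, G, -, h2, -⟩ := listProb_factor δ obs τ l [] s'
        simp only [hPr.2, h2]
        exact Finset.measurable_fun_prod _ fun w _ =>
          (Measurable.of_discrete (f := G w)).comp (measurable_pi_apply w)
      · simp [hne _ _ _ hs]
  have hbind : P.bind (fun f => Pr sStar (pureStrat obs f)) = Pr sStar σ := by
    symm
    refine ext_of_generate_finite _ generateFrom_Cyl isPiSystem_Cyl ?_ ?_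
    · rintro _ ⟨l, rfl⟩
      have hm : MeasurableSet (Cyl l : Set (ℕ → S)) := by
        rw [generateFrom_Cyl]
        exact MeasurableSpace.measurableSet_generateFrom ⟨_, rfl⟩
      rw [Measure.bind_apply hm hmeas.aemeasurable]
      match l with
      | [] => simp [hnil]
      | s' :: l =>
        by_cases hs : s' = sStar
        · subst hs
          obtain ⟨F, G, -, h2, h3⟩ := listProb_factor δ obs τ l [] s'
          simp only [hPr.2, h2]
          rw [hτ, h3]
          rw [ProbabilityTheory.lintegral_prod_eq_prod_lintegral_of_indepFun F
            (fun w (f : List O → A) => G w (f w))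
            (ProbabilityTheory.iIndepFun_infinitePi fun w => Measurable.of_discrete)
            (fun w => (Measurable.of_discrete (f := G w)).comp (measurable_pi_apply w))]
          refine Finset.prod_congr rfl fun w _ => ?_
          have : ∫⁻ f, G w (f w) ∂P = ∫⁻ a, G w a ∂((τ w).toMeasure) := by
            rw [← Measure.infinitePi_map_eval (fun w => (τ w).toMeasure) w,
              lintegral_map Measurable.of_discrete (measurable_pi_apply w)]
          rw [this, lintegral_fintype]
          refine Finset.sum_congr rfl fun a _ => ?_
          rw [PMF.toMeasure_apply_singleton _ _ (MeasurableSet.singleton a), mul_comm]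
        · simp [hne _ _ _ hs]
    · rw [Measure.bind_apply MeasurableSet.univ hmeas.aemeasurable]
      simp
  have hint : ∫⁻ f, Pr sStar (pureStrat obs f) φ ∂P = Pr sStar σ φ := by
    rw [← hbind, Measure.bind_apply hφ hmeas.aemeasurable]
  obtain ⟨f, hf⟩ := exists_lintegral_le (μ := P)
    (f := fun f => Pr sStar (pureStrat obs f) φ) (by rw [hint]; exact measure_ne_top _ _)
  refine ⟨pureStrat obs f, fun h => ⟨_, rfl⟩, fun h h' hh => by simp only [pureStrat, hh], ?_⟩
  rw [← hint]
  exact hf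

end Stmt7
end

section
/- Let (S, A, δ, obs) be a POMDP with action set A = {0,1}, let s* be an initial state, let φ ⊆ S^ω be measurable, and let σ be any randomized strategy. For x ∈ [0,1]^ℕ define the pure strategy σ_x by σ_x(s₀⋯s_n) = 0 if x_n ≤ σ(s₀⋯s_n)(0) and σ_x(s₀⋯s_n) = 1 otherwise. Then the map x ↦ Pr_{s*}^{σ_x}(φ) is ν-measurable and Pr_{s*}^σ(φ) = ∫_{[0,1]^ℕ} Pr_{s*}^{σ_x}(φ) dν(x). In particular, if σ is observation-based then each σ_x is a pure observation-based strategy, and there exists x ∈ [0,1]^ℕ with Pr_{s*}^σ(φ) ≤ Pr_{s*}^{σ_x}(φ). -/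
/-!
STATEMENT 8: derandomization by integrating over coin sequences. For a POMDP with
action set `{0,1}` (here `Fin 2`), the winning probability of a randomized strategy `σ`
is the `ν`-integral over `x ∈ [0,1]^ℕ` of the winning probabilities of the derandomized
pure strategies `σ_x`, where `ν` is the countable product of Lebesgue measure on `[0,1]`
(axiomatized by its values on boxes).
-/

open MeasureTheory
open scoped ENNReal

namespace Stmt8

variable {S O : Type}

/-- The cylinder set of infinite plays extending the finite prefix `l`. -/
def Cyl (l : List S) : Set (ℕ → S) := {ρ | ∀ i : Fin l.length, ρ i.1 = l.get i}

/-- Probability of observing the successive states `rest` after the history `hist ++ [cur]`. -/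
noncomputable def listProb (δ : S → Fin 2 → PMF S) (σ : List S → PMF (Fin 2)) :
    List S → S → List S → ℝ≥0∞
  | _, _, [] => 1
  | hist, cur, s' :: rest =>
      (∑' a, σ (hist ++ [cur]) a * δ cur a s') * listProb δ σ (hist ++ [cur]) s' rest

/-- `Pr` is the family of Ionescu–Tulcea play measures of the POMDP with transitions `δ`. -/
def IsPlayMeasure [MeasurableSpace S] (δ : S → Fin 2 → PMF S)
    (Pr : S → (List S → PMF (Fin 2)) → Measure (ℕ → S)) : Prop :=
  (∀ s σ, IsProbabilityMeasure (Pr s σ)) ∧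
    ∀ s σ (l : List S), Pr s σ (Cyl (s :: l)) = listProb δ σ [] s l

/-- An observation-based strategy only depends on the observation sequence. -/
def ObsBased (obs : S → O) (σ : List S → PMF (Fin 2)) : Prop :=
  ∀ h h' : List S, h.map obs = h'.map obs → σ h = σ h'

/-- A strategy is pure if it always plays a Dirac distribution. -/
def IsPure (σ : List S → PMF (Fin 2)) : Prop := ∀ h, ∃ a, σ h = PMF.pure a

/-- `ν` is the countable product of Lebesgue measure on `[0,1]`, viewed as a probability
measure on `ℕ → ℝ`: it is characterized by its values on the boxes `∀ i < m, x i ∈ [0, t i]`. -/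
def IsCubeMeasure (ν : Measure (ℕ → ℝ)) : Prop :=
  IsProbabilityMeasure ν ∧
    ∀ (m : ℕ) (t : ℕ → ℝ), (∀ i, t i ∈ Set.Icc (0 : ℝ) 1) →
      ν {x | ∀ i < m, x i ∈ Set.Icc (0 : ℝ) (t i)} =
        ∏ i ∈ Finset.range m, ENNReal.ofReal (t i)

/-- The derandomized pure strategy `σ_x`: on the history `s₀ ⋯ s_n` (of length `n + 1`) it
plays `0` if `x n ≤ σ(s₀ ⋯ s_n)(0)` and `1` otherwise. -/
noncomputable def sigmaX (σ : List S → PMF (Fin 2)) (x : ℕ → ℝ) : List S → PMF (Fin 2) :=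
  fun h => PMF.pure (if ENNReal.ofReal (x (h.length - 1)) ≤ σ h 0 then 0 else 1)


/-- Lebesgue measure on `[0,1]`. -/
noncomputable def lam : Measure ℝ := volume.restrict (Set.Icc (0 : ℝ) 1)

instance lam_prob : IsProbabilityMeasure lam := ⟨by simp [lam]⟩

lemma cube_ae {ν : Measure (ℕ → ℝ)} (hν : IsCubeMeasure ν) :
    ∀ᵐ x ∂ν, ∀ i, x i ∈ Set.Icc (0 : ℝ) 1 := by
  obtain ⟨hp, h⟩ := hν
  rw [ae_all_iff]
  intro i
  have h1 := h (i + 1) (fun _ => 1) (by simp)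
  simp only [ENNReal.ofReal_one, Finset.prod_const_one] at h1
  have hm : MeasurableSet {x : ℕ → ℝ | ∀ j < i + 1, x j ∈ Set.Icc (0 : ℝ) 1} := by
    measurability
  have h2 := (prob_compl_eq_zero_iff hm).2 h1
  rw [ae_iff]
  refine measure_mono_null ?_ h2
  intro x hx hx'
  exact hx (hx' i (Nat.lt_succ_self i))

lemma lam_Iic (t : ℝ) : lam (Set.Iic t) = ENNReal.ofReal (min t 1) := by
  rw [lam, Measure.restrict_apply measurableSet_Iic]
  have : Set.Iic t ∩ Set.Icc (0 : ℝ) 1 = Set.Icc 0 (min t 1) := by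
    ext x; simp; tauto
  rw [this]; simp

lemma cube_map {ν : Measure (ℕ → ℝ)} (hν : IsCubeMeasure ν) (m : ℕ) :
    Measure.pi (fun _ : Fin m => lam) = ν.map (fun x (i : Fin m) => x i) := by
  have hp := hν.1
  have hmeas : Measurable (fun (x : ℕ → ℝ) (i : Fin m) => x i) := by fun_prop
  refine Measure.pi_eq_generateFrom (C := fun _ => Set.range Set.Iic)
    (fun _ => ?_) (fun _ => isPiSystem_Iic) (fun _ => ?_) ?_
  · rw [← borel_eq_generateFrom_Iic]; exact (BorelSpace.measurable_eq).symm
  · refine ⟨fun n => Set.Iic (n : ℝ), fun n => ⟨_, rfl⟩, fun n => measure_lt_top _ _, ?_⟩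
    ext x; simp; exact exists_nat_ge x
  · intro s hs
    choose t ht using hs
    have hs' : s = fun i => Set.Iic (t i) := by ext1 i; exact (ht i).symm
    subst hs'
    rw [Measure.map_apply hmeas (MeasurableSet.univ_pi fun i => measurableSet_Iic)]
    simp only [lam_Iic]
    by_cases hneg : ∃ i, t i < 0
    · obtain ⟨i, hi⟩ := hneg
      rw [Finset.prod_eq_zero (Finset.mem_univ i)
        (ENNReal.ofReal_eq_zero.2 ((min_le_left _ _).trans hi.le))]
      have h0 := ae_iff.1 (cube_ae hν)
      refine measure_mono_null ?_ h0
      intro x hx hx'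
      have h1 : x i ≤ t i := hx i (Set.mem_univ i)
      have h2 := (hx' i).1
      linarith
    · push Not at hneg
      have h := hν.2 m (fun i => if h : i < m then min (t ⟨i, h⟩) 1 else 1) (by
        intro i
        split_ifs with h
        · exact ⟨le_min (hneg _) zero_le_one, min_le_right _ _⟩
        · simp)
      rw [Finset.prod_range] at h
      simp only [Fin.is_lt, dite_true, Fin.eta] at h
      rw [← h]
      apply measure_congr
      filter_upwards [cube_ae hν] with x hx
      apply propext
      change (∀ i : Fin m, i ∈ Set.univ → x i ≤ t i) ↔ (∀ i < m, _)
      constructor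
      · intro H i hi
        simp only [hi, dite_true]
        exact ⟨(hx i).1, le_min (H ⟨i, hi⟩ trivial) (hx i).2⟩
      · intro H i _
        have := (H i i.2).2
        simp only [i.2, dite_true] at this
        exact this.trans (min_le_left _ _)

lemma lintegral_cube {ν : Measure (ℕ → ℝ)} (hν : IsCubeMeasure ν) (m : ℕ)
    (g : ℕ → ℝ → ℝ≥0∞) (hg : ∀ i, Measurable (g i)) :
    ∫⁻ x, ∏ i ∈ Finset.range m, g i (x i) ∂ν = ∏ i ∈ Finset.range m, ∫⁻ t, g i t ∂lam := by
  have hmeas : Measurable (fun (x : ℕ → ℝ) (i : Fin m) => x i) := by fun_prop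
  simp only [Finset.prod_range]
  have h1 : ∫⁻ x, ∏ i : Fin m, g i (x i) ∂ν =
      ∫⁻ y, ∏ i : Fin m, g i (y i) ∂(ν.map (fun x (i : Fin m) => x i)) := by
    rw [lintegral_map (by fun_prop) hmeas]
  rw [h1, ← cube_map hν]
  have hind := ProbabilityTheory.iIndepFun_pi (μ := fun _ : Fin m => lam)
    (X := fun i : Fin m => g i) (fun i => (hg i).aemeasurable)
  rw [ProbabilityTheory.lintegral_prod_eq_prod_lintegral_of_indepFun _ _ hind
    (fun i => by fun_prop)]
  refine Finset.prod_congr rfl fun i _ => ?_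
  exact (measurePreserving_eval (fun _ : Fin m => lam) i).lintegral_comp (hg i)

lemma step_meas (p : PMF (Fin 2)) (d : Fin 2 → ℝ≥0∞) :
    Measurable (fun t : ℝ =>
      ∑' a, (PMF.pure (if ENNReal.ofReal t ≤ p 0 then (0 : Fin 2) else 1)) a * d a) := by
  have : (fun t : ℝ =>
      ∑' a, (PMF.pure (if ENNReal.ofReal t ≤ p 0 then (0 : Fin 2) else 1)) a * d a) =
      fun t : ℝ => if ENNReal.ofReal t ≤ p 0 then d 0 else d 1 := by
    ext t
    split_ifs <;> simp [tsum_fintype, PMF.pure_apply]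
  rw [this]
  exact Measurable.ite (measurableSet_le (by fun_prop) (by fun_prop)) (by fun_prop) (by fun_prop)

lemma step_int (p : PMF (Fin 2)) (d : Fin 2 → ℝ≥0∞) :
    ∫⁻ t, ∑' a, (PMF.pure (if ENNReal.ofReal t ≤ p 0 then (0 : Fin 2) else 1)) a * d a ∂lam
      = ∑' a, p a * d a := by
  have hp0 : p 0 ≠ ∞ := p.apply_ne_top 0
  have hp1 : p 0 ≤ 1 := p.coe_le_one 0
  have hsum : p 0 + p 1 = 1 := by
    have := p.tsum_coe
    rwa [tsum_fintype, Fin.sum_univ_two] at this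
  have hset : {t : ℝ | ENNReal.ofReal t ≤ p 0} = Set.Iic (p 0).toReal := by
    ext t
    exact ENNReal.ofReal_le_iff_le_toReal hp0
  have hl : lam (Set.Iic (p 0).toReal) = p 0 := by
    rw [lam_Iic, min_eq_left (ENNReal.toReal_le_of_le_ofReal zero_le_one (by simpa using hp1)),
      ENNReal.ofReal_toReal hp0]
  have hl' : lam (Set.Iic (p 0).toReal)ᶜ = p 1 := by
    rw [prob_compl_eq_one_sub measurableSet_Iic, hl, ← hsum, ENNReal.add_sub_cancel_left hp0]
  have : (fun t : ℝ =>
      ∑' a, (PMF.pure (if ENNReal.ofReal t ≤ p 0 then (0 : Fin 2) else 1)) a * d a) =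
      fun t : ℝ => (Set.Iic (p 0).toReal).indicator (fun _ => d 0) t +
        (Set.Iic (p 0).toReal)ᶜ.indicator (fun _ => d 1) t := by
    ext t
    have ht : ENNReal.ofReal t ≤ p 0 ↔ t ∈ Set.Iic (p 0).toReal := by rw [← hset]; rfl
    by_cases h : t ∈ Set.Iic (p 0).toReal
    · rw [if_pos (ht.2 h), Set.indicator_of_mem h, Set.indicator_of_notMem (by simpa using h)]
      simp [tsum_fintype, PMF.pure_apply]
    · rw [if_neg (fun h' => h (ht.1 h')), Set.indicator_of_notMem h, Set.indicator_of_mem h]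
      simp [tsum_fintype, PMF.pure_apply]
  rw [this, lintegral_add_left (measurable_const.indicator measurableSet_Iic),
    lintegral_indicator_const measurableSet_Iic,
    lintegral_indicator_const measurableSet_Iic.compl, hl, hl', tsum_fintype, Fin.sum_univ_two,
    mul_comm, mul_comm (d 1)]

lemma listProb_prod (δ : S → Fin 2 → PMF S) (σ : List S → PMF (Fin 2)) (rest : List S) :
    ∀ (hist : List S) (cur : S), ∃ g : ℕ → ℝ → ℝ≥0∞, (∀ i, Measurable (g i)) ∧
      (∀ x, listProb δ (sigmaX σ x) hist cur rest =
        ∏ i ∈ Finset.range rest.length, g i (x (hist.length + i))) ∧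
      listProb δ σ hist cur rest = ∏ i ∈ Finset.range rest.length, ∫⁻ t, g i t ∂lam := by
  induction rest with
  | nil => intro hist cur; exact ⟨fun _ _ => 1, fun _ => measurable_const, by simp [listProb],
      by simp [listProb]⟩
  | cons s' rest ih =>
    intro hist cur
    obtain ⟨g, hg, h1, h2⟩ := ih (hist ++ [cur]) s'
    refine ⟨fun n => Nat.casesOn n (fun t => ∑' a, (PMF.pure
      (if ENNReal.ofReal t ≤ σ (hist ++ [cur]) 0 then (0 : Fin 2) else 1)) a * δ cur a s') g,
      ?_, ?_, ?_⟩
    · rintro (_ | n)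
      · exact step_meas _ (fun a => δ cur a s')
      · exact hg n
    · intro x
      rw [List.length_cons, Finset.prod_range_succ', listProb, h1, mul_comm]
      congr 1
      · refine Finset.prod_congr rfl fun i _ => ?_
        simp [add_assoc, add_comm 1 i]
      · simp [sigmaX]
    · rw [List.length_cons, Finset.prod_range_succ', listProb, h2, mul_comm]
      congr 1
      exact (step_int _ (fun a => δ cur a s')).symm

/-- The generating family of cylinders. -/
def cyls (S : Type) : Set (Set (ℕ → S)) := insert ∅ (Set.range Cyl)

lemma cyl_meas [MeasurableSpace S] [DiscreteMeasurableSpace S] (l : List S) :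
    MeasurableSet (Cyl l) := by
  have : Cyl l = ⋂ i : Fin l.length, (fun ρ : ℕ → S => ρ i.1) ⁻¹' {l.get i} := by
    ext ρ; simp [Cyl]
  rw [this]
  exact MeasurableSet.iInter fun i => measurable_pi_apply _ (MeasurableSet.of_discrete)

lemma cyls_gen [Finite S] [MeasurableSpace S] [DiscreteMeasurableSpace S] :
    (MeasurableSpace.pi : MeasurableSpace (ℕ → S)) = MeasurableSpace.generateFrom (cyls S) := by
  apply le_antisymm
  · refine iSup_le fun n => ?_
    rintro _ ⟨A, -, rfl⟩
    have : (fun ρ : ℕ → S => ρ n) ⁻¹' A =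
        ⋃ l : {l : List S // ∃ h : n < l.length, l[n] ∈ A}, Cyl l.1 := by
      ext ρ
      simp only [Set.mem_preimage, Set.mem_iUnion]
      constructor
      · intro h
        refine ⟨⟨(List.range (n + 1)).map ρ, by simpa using h⟩, ?_⟩
        intro i; simp
      · rintro ⟨⟨l, h, hl⟩, hρ⟩
        have := hρ ⟨n, h⟩
        simp only [List.get_eq_getElem] at this
        rwa [this]
    rw [this]
    refine MeasurableSet.iUnion fun l => ?_
    exact MeasurableSpace.measurableSet_generateFrom (Or.inr ⟨_, rfl⟩)
  · refine MeasurableSpace.generateFrom_le ?_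
    rintro _ (rfl | ⟨l, rfl⟩)
    · exact MeasurableSet.empty
    · exact cyl_meas l

lemma cyl_inter (l l' : List S) (hl : l.length ≤ l'.length) (hne : (Cyl l ∩ Cyl l').Nonempty) :
    Cyl l ∩ Cyl l' = Cyl l' := by
  apply Set.inter_eq_right.2
  obtain ⟨ρ, h1, h2⟩ := hne
  intro η hη i
  have a := hη ⟨i, i.2.trans_le hl⟩
  have b := h2 ⟨i, i.2.trans_le hl⟩
  exact a.trans (b.symm.trans (h1 i))

lemma cyls_pi : IsPiSystem (cyls S) := by
  rintro _ (rfl | ⟨l, rfl⟩) _ (rfl | ⟨l', rfl⟩) hne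
  · simp at hne
  · simp at hne
  · simp at hne
  · rcases le_total l.length l'.length with h | h
    · rw [cyl_inter l l' h hne]; exact Or.inr ⟨_, rfl⟩
    · rw [Set.inter_comm] at hne ⊢
      rw [cyl_inter l' l h hne]; exact Or.inr ⟨_, rfl⟩

lemma cyl_value [MeasurableSpace S] [DiscreteMeasurableSpace S] {δ : S → Fin 2 → PMF S}
    {Pr : S → (List S → PMF (Fin 2)) → Measure (ℕ → S)} (hPr : IsPlayMeasure δ Pr) (s a : S)
    (has : a ≠ s) (σ : List S → PMF (Fin 2)) (l : List S) : Pr s σ (Cyl (a :: l)) = 0 := by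
  have hp := hPr.1 s σ
  have h := hPr.2 s σ []
  rw [listProb] at h
  refine measure_mono_null ?_ ((prob_compl_eq_zero_iff (cyl_meas [s])).2 h)
  intro ρ hρ hρ'
  have h1 := hρ ⟨0, by simp⟩
  have h2 := hρ' ⟨0, by simp⟩
  simp at h1 h2
  exact has (h1.symm.trans h2)

lemma cyl_nil : Cyl ([] : List S) = Set.univ := by
  ext ρ; simp [Cyl]

lemma cyls_eval [MeasurableSpace S] [DiscreteMeasurableSpace S] {δ : S → Fin 2 → PMF S}
    {Pr : S → (List S → PMF (Fin 2)) → Measure (ℕ → S)} (hPr : IsPlayMeasure δ Pr)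
    {ν : Measure (ℕ → ℝ)} (hν : IsCubeMeasure ν) (s : S)
    (σ : List S → PMF (Fin 2)) (A : Set (ℕ → S)) (hA : A ∈ cyls S) :
    Measurable (fun x => Pr s (sigmaX σ x) A) ∧
      Pr s σ A = ∫⁻ x, Pr s (sigmaX σ x) A ∂ν := by
  have hp := hPr.1
  have hν1 := hν.1
  rcases hA with rfl | ⟨l, rfl⟩
  · simp
  · rcases l with _ | ⟨a, l⟩
    · simp [cyl_nil]
    · by_cases has : a = s
      · subst has
        obtain ⟨g, hg, h1, h2⟩ := listProb_prod δ σ l [] a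
        simp only [hPr.2, h1, h2, List.length_nil, zero_add]
        exact ⟨by fun_prop, (lintegral_cube hν _ g hg).symm⟩
      · simp [cyl_value hPr s a has]

theorem stmt_8 {S O : Type} [Fintype S] [Nonempty S] [Fintype O]
    [MeasurableSpace S] [DiscreteMeasurableSpace S]
    (δ : S → Fin 2 → PMF S) (obs : S → O)
    (Pr : S → (List S → PMF (Fin 2)) → Measure (ℕ → S)) (hPr : IsPlayMeasure δ Pr)
    (ν : Measure (ℕ → ℝ)) (hν : IsCubeMeasure ν)
    (sStar : S) (φ : Set (ℕ → S)) (hφ : MeasurableSet φ)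
    (σ : List S → PMF (Fin 2)) :
    Measurable (fun x : ℕ → ℝ => Pr sStar (sigmaX σ x) φ) ∧
    Pr sStar σ φ = ∫⁻ x, Pr sStar (sigmaX σ x) φ ∂ν ∧
    (ObsBased obs σ →
      (∀ x : ℕ → ℝ, IsPure (sigmaX σ x) ∧ ObsBased obs (sigmaX σ x)) ∧
      ∃ x : ℕ → ℝ, (∀ i, x i ∈ Set.Icc (0 : ℝ) 1) ∧
        Pr sStar σ φ ≤ Pr sStar (sigmaX σ x) φ) := by

  have hp := hPr.1
  have hν1 := hν.1
  have hκ : Measurable (fun x : ℕ → ℝ => Pr sStar (sigmaX σ x)) :=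
    Measurable.measure_of_isPiSystem_of_isProbabilityMeasure cyls_gen cyls_pi
      (fun A hA => (cyls_eval hPr hν sStar σ A hA).1)
  have hcyl : ∀ A ∈ cyls S, MeasurableSet A := by
    rintro _ (rfl | ⟨l, rfl⟩)
    · exact MeasurableSet.empty
    · exact cyl_meas l
  have heq : Pr sStar σ = ν.bind (fun x : ℕ → ℝ => Pr sStar (sigmaX σ x)) := by
    refine ext_of_generate_finite (cyls S) cyls_gen cyls_pi (fun A hA => ?_) ?_
    · rw [Measure.bind_apply (hcyl A hA) hκ.aemeasurable]
      exact (cyls_eval hPr hν sStar σ A hA).2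
    · rw [Measure.bind_apply MeasurableSet.univ hκ.aemeasurable]
      simp
  have hint : Pr sStar σ φ = ∫⁻ x, Pr sStar (sigmaX σ x) φ ∂ν := by
    rw [← Measure.bind_apply hφ hκ.aemeasurable, ← heq]
  refine ⟨(Measure.measurable_coe hφ).comp hκ, hint, fun hobs => ⟨fun x => ⟨fun h => ⟨_, rfl⟩, ?_⟩, ?_⟩⟩
  · intro h h' hh
    have hlen : h.length = h'.length := by simpa using congrArg List.length hh
    simp only [sigmaX, hlen, hobs h h' hh]
  · obtain ⟨x, hx, hle⟩ := exists_notMem_null_lintegral_le (μ := ν)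
      (f := fun x => Pr sStar (sigmaX σ x) φ) (by rw [← hint]; exact measure_ne_top _ _)
      (ae_iff.1 (cube_ae hν))
    refine ⟨x, ?_, hint.trans_le hle⟩
    by_contra hc
    exact hx hc

end Stmt8
end

section
/- Let (S, A, δ, obs) be a POMDP with A = {0,1} whose transitions have binary branching: there are maps L, R : S × A → S and p : S × A → [0,1] with δ(s,a) = p(s,a)·Dirac(L(s,a)) + (1 − p(s,a))·Dirac(R(s,a)) for all s, a. Fix an initial state s* and a randomized strategy σ, and define f_{s*,σ} : [0,1]^ℕ × [0,1]^ℕ → (S × A)^ℕ by f_{s*,σ}(x,y) = ((s_n, a_{n+1}))_{n≥0}, where recursively s₀ = s*, a_{n+1} = 0 if x_n ≤ σ(s₀⋯s_n)(0) and a_{n+1} = 1 otherwise, and s_{n+1} = L(s_n, a_{n+1}) if y_n ≤ p(s_n, a_{n+1}) and s_{n+1} = R(s_n, a_{n+1}) otherwise. Then f_{s*,σ} is measurable, and the pushforward of the product measure ν ⊗ ν under f_{s*,σ} equals μ, the law of the state–action play of the POMDP from s* under σ. -/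
/-!
STATEMENT 9: the simulation map `f_{s*,σ}` of a binary-branching POMDP is measurable, and
the pushforward of `ν ⊗ ν` under it is the law `μ` of the state–action play from `s*`
under `σ`. Here `ν` is the countable product of Lebesgue measure on `[0,1]` and `μ` is
axiomatized by its (Ionescu–Tulcea) cylinder probabilities.
-/

open MeasureTheory
open scoped ENNReal

namespace Stmt9

variable {S O : Type}

/-- The cylinder set of infinite sequences extending the finite prefix `l`. -/
def Cyl {α : Type} (l : List α) : Set (ℕ → α) := {ρ | ∀ i : Fin l.length, ρ i.1 = l.get i}

/-- `ν` is the countable product of Lebesgue measure on `[0,1]`, viewed as a probability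
measure on `ℕ → ℝ`: it is characterized by its values on the boxes `∀ i < m, x i ∈ [0, t i]`. -/
def IsCubeMeasure (ν : Measure (ℕ → ℝ)) : Prop :=
  IsProbabilityMeasure ν ∧
    ∀ (m : ℕ) (t : ℕ → ℝ), (∀ i, t i ∈ Set.Icc (0 : ℝ) 1) →
      ν {x | ∀ i < m, x i ∈ Set.Icc (0 : ℝ) (t i)} =
        ∏ i ∈ Finset.range m, ENNReal.ofReal (t i)

/-- Probability of the state–action continuation `rest` after the history `hist ++ [cur]`
when the last action played was `a`: each pair `(t, b)` contributes the probability that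
the next state is `t` (under `δ cur a`) times the probability that the next action is `b`. -/
noncomputable def saProb (δ : S → Fin 2 → PMF S) (σ : List S → PMF (Fin 2)) :
    List S → S → Fin 2 → List (S × Fin 2) → ℝ≥0∞
  | _, _, _, [] => 1
  | hist, cur, a, (t, b) :: rest =>
      δ cur a t * σ (hist ++ [cur, t]) b * saProb δ σ (hist ++ [cur]) t b rest

/-- `μ` is the law of the state–action play `((s_n, a_{n+1}))_{n ≥ 0}` of the POMDP `δ`
from `sStar` under the strategy `σ`: a probability measure on `(S × A)^ℕ` with the
Ionescu–Tulcea cylinder probabilities. -/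
def IsSALaw [MeasurableSpace S] [DecidableEq S] (δ : S → Fin 2 → PMF S)
    (σ : List S → PMF (Fin 2)) (sStar : S) (μ : Measure (ℕ → S × Fin 2)) : Prop :=
  IsProbabilityMeasure μ ∧
    ∀ l : List (S × Fin 2),
      μ (Cyl l) =
        match l with
        | [] => 1
        | (s₀, a₁) :: rest =>
            (if s₀ = sStar then 1 else 0) * σ [s₀] a₁ * saProb δ σ [] s₀ a₁ rest

/-- The histories `[s₀, …, s_n]` of the play simulated from the coin sequences `x` (for the
strategy) and `y` (for the transitions). -/
noncomputable def hseq (σ : List S → PMF (Fin 2)) (L R : S → Fin 2 → S) (p : S → Fin 2 → ℝ)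
    (sStar : S) (x y : ℕ → ℝ) : ℕ → List S
  | 0 => [sStar]
  | n + 1 =>
      let h := hseq σ L R p sStar x y n
      let cur := h.getLastD sStar
      let a : Fin 2 := if ENNReal.ofReal (x n) ≤ σ h 0 then 0 else 1
      h ++ [if y n ≤ p cur a then L cur a else R cur a]

/-- The simulation map `f_{s*,σ}`: from the coin sequences `(x, y)` it produces the
state–action play `((s_n, a_{n+1}))_{n ≥ 0}`, where `a_{n+1} = 0` iff
`x n ≤ σ(s₀ ⋯ s_n)(0)`, and `s_{n+1}` is `L s_n a_{n+1}` if `y n ≤ p s_n a_{n+1}` and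
`R s_n a_{n+1}` otherwise. -/
noncomputable def playMap (σ : List S → PMF (Fin 2)) (L R : S → Fin 2 → S)
    (p : S → Fin 2 → ℝ) (sStar : S) (x y : ℕ → ℝ) : ℕ → S × Fin 2 :=
  fun n =>
    let h := hseq σ L R p sStar x y n
    (h.getLastD sStar, if ENNReal.ofReal (x n) ≤ σ h 0 then 0 else 1)

/-- Uniform measure on the unit interval. -/
noncomputable def lam : Measure ℝ := volume.restrict (Set.Icc (0 : ℝ) 1)

instance : IsProbabilityMeasure lam := ⟨by simp [lam]⟩

lemma lam_Iic (t : ℝ) (h0 : 0 ≤ t) (h1 : t ≤ 1) : lam (Set.Iic t) = ENNReal.ofReal t := by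
  have : Set.Iic t ∩ Set.Icc 0 1 = Set.Icc 0 t := by
    ext x; simp only [Set.mem_inter_iff, Set.mem_Iic, Set.mem_Icc]
    constructor
    · rintro ⟨a, b, c⟩; exact ⟨b, a⟩
    · rintro ⟨a, b⟩; exact ⟨b, a, b.trans h1⟩
  rw [lam, Measure.restrict_apply measurableSet_Iic, this]; simp

lemma lam_Iic_clip (t : ℝ) : lam (Set.Iic t) = ENNReal.ofReal (max 0 (min t 1)) := by
  rcases le_total t 1 with h1 | h1
  · rcases le_total 0 t with h0 | h0
    · rw [lam_Iic t h0 h1]; simp [h0, h1]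
    · have : Set.Iic t ∩ Set.Icc 0 1 ⊆ {0} := by
        rintro x ⟨a, b, c⟩
        simp only [Set.mem_Iic] at a
        simp only [Set.mem_singleton_iff]; linarith
      rw [lam, Measure.restrict_apply measurableSet_Iic, measure_mono_null this (by simp)]
      simp [h0, h1]
  · have : Set.Iic t ∩ Set.Icc 0 1 = Set.Icc (0 : ℝ) 1 := by
      apply Set.inter_eq_right.2
      rintro x ⟨a, b⟩; exact b.trans h1
    rw [lam, Measure.restrict_apply measurableSet_Iic, this]; simp [h1]

lemma cube_ae (ν : Measure (ℕ → ℝ)) (hν : IsCubeMeasure ν) (j : ℕ) :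
    ∀ᵐ x ∂ν, 0 < x j ∧ x j ≤ 1 := by
  obtain ⟨hP, hb⟩ := hν
  have h1 : ∀ᵐ x ∂ν, ∀ i < j + 1, x i ∈ Set.Icc (0 : ℝ) 1 := by
    have h := hb (j + 1) (fun _ => 1) (fun _ => by simp)
    simp only [ENNReal.ofReal_one, Finset.prod_const_one] at h
    have hm : MeasurableSet {x : ℕ → ℝ | ∀ i < j + 1, x i ∈ Set.Icc (0 : ℝ) 1} := by
      have : {x : ℕ → ℝ | ∀ i < j + 1, x i ∈ Set.Icc (0 : ℝ) 1} =
        ⋂ i, ⋂ (_ : i < j + 1), (fun x : ℕ → ℝ => x i) ⁻¹' Set.Icc (0 : ℝ) 1 := by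
          ext; simp
      rw [this]
      exact MeasurableSet.iInter fun i => MeasurableSet.iInter fun _ =>
        measurable_pi_apply i measurableSet_Icc
    rw [ae_iff]
    exact (prob_compl_eq_zero_iff hm).2 h
  have h2 : ∀ᵐ x ∂ν, ¬ (∀ i < j + 1, x i ∈ Set.Icc (0 : ℝ) (if i = j then 0 else 1)) := by
    have h := hb (j + 1) (fun i => if i = j then 0 else 1) (fun i => by
      by_cases h : i = j <;> simp [h])
    rw [Finset.prod_eq_zero (i := j) (by simp) (by simp)] at h
    rw [ae_iff]
    simpa only [not_not] using h
  filter_upwards [h1, h2] with x hx hx2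
  have hj := hx j (by omega)
  refine ⟨lt_of_le_of_ne hj.1 fun h0 => hx2 fun i hi => ?_, hj.2⟩
  by_cases h : i = j
  · subst h; simp [← h0]
  · simpa [h] using hx i hi

lemma cube_map (ν : Measure (ℕ → ℝ)) (hν : IsCubeMeasure ν) (m : ℕ) :
    ν.map (fun x (i : Fin m) => x i) = Measure.pi (fun _ : Fin m => lam) := by
  have hmeas : Measurable (fun (x : ℕ → ℝ) (i : Fin m) => x i) :=
    measurable_pi_lambda _ fun i => measurable_pi_apply _
  symm
  refine Measure.pi_eq_generateFrom (C := fun _ => Set.range Set.Iic)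
    (fun _ => ?_) (fun _ => ?_) (fun _ => ?_) ?_
  · rw [BorelSpace.measurable_eq (α := ℝ), borel_eq_generateFrom_Iic]
  · rintro _ ⟨a, rfl⟩ _ ⟨b, rfl⟩ _
    exact ⟨min a b, Set.Iic_inter_Iic.symm⟩
  · exact
    { set := fun n => Set.Iic (n : ℝ)
      set_mem := fun n => ⟨n, rfl⟩
      finite := fun n => measure_lt_top _ _
      spanning := by
        ext x; simp only [Set.mem_iUnion, Set.mem_Iic, Set.mem_univ, iff_true]
        exact exists_nat_ge x }
  · intro s hs
    choose t ht using hs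
    have hs' : s = fun i => Set.Iic (t i) := by funext i; exact (ht i).symm
    subst hs'
    rw [Measure.map_apply hmeas (MeasurableSet.univ_pi fun i => measurableSet_Iic)]
    let T : ℕ → ℝ := fun i => if h : i < m then max 0 (min (t ⟨i, h⟩) 1) else 0
    have hT : ∀ i, T i ∈ Set.Icc (0 : ℝ) 1 := by
      intro i
      by_cases h : i < m <;> simp [T, h]
    have key : ν ((fun (x : ℕ → ℝ) (i : Fin m) => x i) ⁻¹'
        (Set.univ.pi fun i => Set.Iic (t i))) =
        ν {x | ∀ i < m, x i ∈ Set.Icc (0 : ℝ) (T i)} := by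
      apply measure_congr
      have hae : ∀ᵐ x ∂ν, ∀ j, 0 < x j ∧ x j ≤ 1 := ae_all_iff.2 (cube_ae ν hν)
      filter_upwards [hae] with x hx
      apply propext
      change (x ∈ (fun (x : ℕ → ℝ) (i : Fin m) => x i) ⁻¹'
        (Set.univ.pi fun i => Set.Iic (t i))) ↔ (∀ i < m, x i ∈ Set.Icc (0 : ℝ) (T i))
      simp only [Set.mem_preimage, Set.mem_pi, Set.mem_univ, true_imp_iff, Set.mem_Iic,
        Set.mem_Icc]
      constructor
      · intro h i hi
        refine ⟨(hx i).1.le, ?_⟩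
        simp only [T, hi, dite_true]
        exact le_max_of_le_right (le_min (h ⟨i, hi⟩) (hx i).2)
      · intro h i
        have h' := (h i i.2).2
        simp only [T, i.2, dite_true] at h'
        rcases le_max_iff.1 h' with h'' | h''
        · exact absurd h'' (not_le.2 (hx i).1)
        · exact h''.trans (min_le_left _ _)
    rw [key, hν.2 m T hT, ← Fin.prod_univ_eq_prod_range (fun i => ENNReal.ofReal (T i)) m]
    refine Finset.prod_congr rfl fun i _ => ?_
    rw [lam_Iic_clip]
    simp [T]

lemma cube_meas (m : ℕ) (A : ℕ → Set ℝ) (hA : ∀ i, MeasurableSet (A i)) :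
    MeasurableSet {x : ℕ → ℝ | ∀ i < m, x i ∈ A i} := by
  have : {x : ℕ → ℝ | ∀ i < m, x i ∈ A i} =
    ⋂ i, ⋂ (_ : i < m), (fun x : ℕ → ℝ => x i) ⁻¹' A i := by
      ext; simp
  rw [this]
  exact MeasurableSet.iInter fun i => MeasurableSet.iInter fun _ =>
    measurable_pi_apply i (hA i)

lemma cube_box (ν : Measure (ℕ → ℝ)) (hν : IsCubeMeasure ν) (m : ℕ) (A : ℕ → Set ℝ)
    (hA : ∀ i, MeasurableSet (A i)) :
    ν {x | ∀ i < m, x i ∈ A i} = ∏ i ∈ Finset.range m, lam (A i) := by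
  have hmeas : Measurable (fun (x : ℕ → ℝ) (i : Fin m) => x i) :=
    measurable_pi_lambda _ fun i => measurable_pi_apply _
  have h := congrArg (fun κ => κ (Set.univ.pi fun i : Fin m => A i)) (cube_map ν hν m)
  simp only [Measure.pi_pi] at h
  rw [Measure.map_apply hmeas (MeasurableSet.univ_pi fun i => hA i),
    Fin.prod_univ_eq_prod_range (fun i => lam (A i)) m] at h
  rw [← h]
  congr 1
  ext x
  simp only [Set.mem_ofPred_eq, Set.mem_preimage, Set.mem_pi, Set.mem_univ, true_imp_iff]
  exact ⟨fun h i => h i i.2, fun h i hi => h ⟨i, hi⟩⟩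

/-- The simulated action. -/
noncomputable def act (σ : List S → PMF (Fin 2)) (h : List S) (x : ℝ) : Fin 2 :=
  if ENNReal.ofReal x ≤ σ h 0 then 0 else 1

/-- The simulated transition. -/
noncomputable def stp (L R : S → Fin 2 → S) (p : S → Fin 2 → ℝ) (v : S × Fin 2) (y : ℝ) : S :=
  if y ≤ p v.1 v.2 then L v.1 v.2 else R v.1 v.2

/-- History of states of a play. -/
def Hs (ρ : ℕ → S × Fin 2) (n : ℕ) : List S := (List.range (n + 1)).map fun j => (ρ j).1

lemma act_set (σ : List S → PMF (Fin 2)) (h : List S) :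
    {x | ENNReal.ofReal x ≤ σ h 0} = Set.Iic (σ h 0).toReal := by
  ext x
  have := (σ h).apply_ne_top 0
  simp only [Set.mem_ofPred_eq, Set.mem_Iic]
  exact ENNReal.ofReal_le_iff_le_toReal this

lemma act_meas (σ : List S → PMF (Fin 2)) (h : List S) : Measurable (act σ h) := by
  refine Measurable.ite ?_ measurable_const measurable_const
  rw [act_set]; exact measurableSet_Iic

lemma lam_act (σ : List S → PMF (Fin 2)) (h : List S) (b : Fin 2) :
    lam {x | act σ h x = b} = σ h b := by
  have hne := (σ h).apply_ne_top 0
  have h0 : lam {x | ENNReal.ofReal x ≤ σ h 0} = σ h 0 := by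
    rw [act_set, lam_Iic _ ENNReal.toReal_nonneg, ENNReal.ofReal_toReal hne]
    exact ENNReal.toReal_le_of_le_ofReal zero_le_one (by simpa using (σ h).coe_le_one 0)
  have hsum : σ h 0 + σ h 1 = 1 := by
    have := (σ h).tsum_coe
    rwa [tsum_fintype, Fin.sum_univ_two] at this
  match b with
  | 0 =>
    rw [← h0]; congr 1; ext x; simp [act]
  | 1 =>
    have : {x | act σ h x = 1} = {x | ENNReal.ofReal x ≤ σ h 0}ᶜ := by
      ext x; simp [act]
    rw [this, prob_compl_eq_one_sub (by rw [act_set]; exact measurableSet_Iic), h0, ← hsum]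
    exact ENNReal.add_sub_cancel_left hne

lemma stp_meas [MeasurableSpace S] (L R : S → Fin 2 → S) (p : S → Fin 2 → ℝ) (v : S × Fin 2) :
    Measurable (stp L R p v) :=
  Measurable.ite measurableSet_Iic measurable_const measurable_const

lemma lam_stp [DecidableEq S] (L R : S → Fin 2 → S) (p : S → Fin 2 → ℝ)
    (hp : ∀ s a, p s a ∈ Set.Icc (0 : ℝ) 1) (v : S × Fin 2) (t : S) :
    lam {y | stp L R p v y = t} = (if t = L v.1 v.2 then ENNReal.ofReal (p v.1 v.2) else 0) +
        (if t = R v.1 v.2 then ENNReal.ofReal (1 - p v.1 v.2) else 0) := by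
  obtain ⟨h0, h1⟩ := hp v.1 v.2
  have hI := lam_Iic _ h0 h1
  have hC : lam (Set.Iic (p v.1 v.2))ᶜ = ENNReal.ofReal (1 - p v.1 v.2) := by
    rw [prob_compl_eq_one_sub measurableSet_Iic, hI, ENNReal.ofReal_sub _ h0, ENNReal.ofReal_one]
  have hset : {y | stp L R p v y = t} =
      (if t = L v.1 v.2 then Set.Iic (p v.1 v.2) else ∅) ∪
      (if t = R v.1 v.2 then (Set.Iic (p v.1 v.2))ᶜ else ∅) := by
    ext y
    simp only [stp, Set.mem_ofPred_eq, Set.mem_union]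
    by_cases hy : y ≤ p v.1 v.2
    · by_cases hl : t = L v.1 v.2 <;> by_cases hr : t = R v.1 v.2 <;>
        simp [hy, hl, hr, eq_comm] <;> grind
    · by_cases hl : t = L v.1 v.2 <;> by_cases hr : t = R v.1 v.2 <;>
        simp [hy, hl, hr, eq_comm] <;> grind
  rw [hset]
  by_cases hl : t = L v.1 v.2
  · by_cases hr : t = R v.1 v.2
    · rw [if_pos hl, if_pos hr, if_pos hl, if_pos hr, Set.union_compl_self, measure_univ,
        ← ENNReal.ofReal_add h0 (by linarith)]
      simp
    · rw [if_pos hl, if_neg hr, if_pos hl, if_neg hr, Set.union_empty, hI, add_zero]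
  · by_cases hr : t = R v.1 v.2
    · rw [if_neg hl, if_pos hr, if_neg hl, if_pos hr, Set.empty_union, hC, zero_add]
    · rw [if_neg hl, if_neg hr, if_neg hl, if_neg hr]; simp

lemma Hs_succ (ρ : ℕ → S × Fin 2) (n : ℕ) : Hs ρ (n + 1) = Hs ρ n ++ [(ρ (n + 1)).1] := by
  simp [Hs, List.range_succ]

lemma Hs_congr (ρ τ : ℕ → S × Fin 2) (n : ℕ) (h : ∀ i ≤ n, (ρ i).1 = (τ i).1) :
    Hs ρ n = Hs τ n := by
  apply List.map_congr_left
  intro i hi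
  exact h i (by have := List.mem_range.1 hi; omega)

section play
variable (σ : List S → PMF (Fin 2)) (L R : S → Fin 2 → S) (p : S → Fin 2 → ℝ)
    (sStar : S) (x y : ℕ → ℝ)

lemma play_snd (n : ℕ) : (playMap σ L R p sStar x y n).2 =
    act σ (hseq σ L R p sStar x y n) (x n) := rfl

lemma play_fst_succ (n : ℕ) : (playMap σ L R p sStar x y (n + 1)).1 =
    stp L R p (playMap σ L R p sStar x y n) (y n) := by
  simp [playMap, hseq, stp]

lemma hseq_eq (n : ℕ) : hseq σ L R p sStar x y n = Hs (playMap σ L R p sStar x y) n := by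
  induction n with
  | zero => simp [Hs, playMap, hseq]
  | succ n ih =>
    rw [Hs_succ, ← ih, play_fst_succ]
    simp [playMap, hseq, stp]

lemma play_iff (ρ : ℕ → S × Fin 2) (n : ℕ) :
    (∀ i < n + 1, playMap σ L R p sStar x y i = ρ i) ↔
      (ρ 0).1 = sStar ∧ (∀ i < n + 1, x i ∈ {z | act σ (Hs ρ i) z = (ρ i).2}) ∧
        (∀ i < n, y i ∈ {z | stp L R p (ρ i) z = (ρ (i + 1)).1}) := by
  simp only [Set.mem_ofPred_eq]
  constructor
  · intro h
    refine ⟨?_, ?_, ?_⟩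
    · rw [← h 0 (by omega)]; simp [playMap, hseq]
    · intro i hi
      rw [← h i hi, play_snd, hseq_eq]
      congr 1
      exact Hs_congr _ _ _ fun j hj => by rw [h j (by omega)]
    · intro i hi
      rw [← h i (by omega), ← h (i + 1) (by omega), play_fst_succ]
  · rintro ⟨h0, h1, h2⟩ i
    induction i using Nat.strong_induction_on with
    | _ i ih =>
      intro hi
      have hf : (playMap σ L R p sStar x y i).1 = (ρ i).1 := by
        rcases i with _ | i
        · rw [h0]; simp [playMap, hseq]
        · rw [play_fst_succ, ih i (by omega) (by omega), h2 i (by omega)]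
      refine Prod.ext hf ?_
      rw [play_snd, ← h1 i hi, hseq_eq]
      congr 1
      refine Hs_congr _ _ _ fun j hj => ?_
      rcases hj.lt_or_eq with hj | rfl
      · rw [ih j hj (by omega)]
      · exact hf

end play

lemma saProb_eq (δ : S → Fin 2 → PMF S) (σ : List S → PMF (Fin 2)) (n : ℕ) :
    ∀ (hist : List S) (ρ : ℕ → S × Fin 2),
    saProb δ σ hist (ρ 0).1 (ρ 0).2 ((List.range n).map fun i => ρ (i + 1)) =
      ∏ i ∈ Finset.range n, (δ (ρ i).1 (ρ i).2 (ρ (i + 1)).1 *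
        σ (hist ++ Hs ρ (i + 1)) (ρ (i + 1)).2) := by
  induction n with
  | zero => intros; simp [saProb]
  | succ n ih =>
    intro hist ρ
    have e : ((List.range (n + 1)).map fun i => ρ (i + 1)) =
        ((ρ 1).1, (ρ 1).2) :: (List.range n).map fun i => ρ (i + 1 + 1) := by
      rw [List.range_succ_eq_map]; simp [Function.comp_def]
    have hH : ∀ i, Hs ρ (i + 1) = (ρ 0).1 :: Hs (fun j => ρ (j + 1)) i := by
      intro i
      unfold Hs
      rw [List.range_succ_eq_map (n := i + 1)]; simp [Function.comp_def]
    rw [e, saProb, ih (hist ++ [(ρ 0).1]) (fun i => ρ (i + 1)), Finset.prod_range_succ', mul_comm]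
    congr 1
    · refine Finset.prod_congr rfl fun i _ => ?_
      rw [hH (i + 1)]; simp

/-- Cylinders determined by a function. -/
def FC {α : Type} (n : ℕ) (ρ : ℕ → α) : Set (ℕ → α) := {τ | ∀ i < n + 1, τ i = ρ i}

lemma FC_eq_Cyl {α : Type} (n : ℕ) (ρ : ℕ → α) :
    FC n ρ = Cyl (ρ 0 :: (List.range n).map fun i => ρ (i + 1)) := by
  have e : (ρ 0 :: (List.range n).map fun i => ρ (i + 1)) = (List.range (n + 1)).map ρ := by
    rw [List.range_succ_eq_map]; simp [Function.comp_def]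
  rw [e]
  ext τ
  simp only [FC, Cyl, Set.mem_ofPred_eq]
  constructor
  · intro h i
    have := i.2
    simp only [List.length_map, List.length_range] at this
    simpa using h i this
  · intro h i hi
    simpa using h ⟨i, by simpa using hi⟩

lemma FC_pi {α : Type} : IsPiSystem {A | ∃ n, ∃ ρ : ℕ → α, A = FC n ρ} := by
  rintro _ ⟨n, ρ, rfl⟩ _ ⟨m, ρ', rfl⟩ ⟨τ, h1, h2⟩
  refine ⟨max n m, τ, ?_⟩
  ext κ
  simp only [FC, Set.mem_inter_iff, Set.mem_ofPred_eq] at *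
  constructor
  · rintro ⟨a, b⟩ i hi
    by_cases h : i < n + 1
    · rw [a i h, h1 i h]
    · have h' : i < m + 1 := by omega
      rw [b i h', h2 i h']
  · intro a
    exact ⟨fun i hi => by rw [a i (by omega), h1 i hi],
      fun i hi => by rw [a i (by omega), h2 i hi]⟩

lemma FC_gen {α : Type} [Finite α] [MeasurableSpace α] [DiscreteMeasurableSpace α] :
    (MeasurableSpace.pi : MeasurableSpace (ℕ → α)) =
      MeasurableSpace.generateFrom {A | ∃ n, ∃ ρ : ℕ → α, A = FC n ρ} := by
  apply le_antisymm
  · refine iSup_le fun n => ?_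
    rw [← measurable_iff_comap_le]
    refine @measurable_to_countable' _ _ _ _ (_) _ fun v => ?_
    have : (fun b : ℕ → α => b n) ⁻¹' {v} = ⋃ g : Fin (n + 1) → α, ⋃ (_ : g (Fin.last n) = v),
        FC n (fun i => if h : i < n + 1 then g ⟨i, h⟩ else v) := by
      ext τ
      simp only [Set.mem_preimage, Set.mem_singleton_iff, Set.mem_iUnion, FC, Set.mem_ofPred_eq]
      constructor
      · intro h
        exact ⟨fun i => τ i, by simpa using h, fun i hi => by simp [hi]⟩
      · rintro ⟨g, hg, h⟩
        rw [h n (by omega)]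
        simpa [Fin.last] using hg
    rw [this]
    exact MeasurableSet.iUnion fun g => MeasurableSet.iUnion fun _ =>
      MeasurableSpace.measurableSet_generateFrom ⟨n, _, rfl⟩
  · apply MeasurableSpace.generateFrom_le
    rintro _ ⟨n, ρ, rfl⟩
    have : FC n ρ = ⋂ i, ⋂ (_ : i < n + 1), (fun x : ℕ → α => x i) ⁻¹' {ρ i} := by
      ext; simp [FC]
    rw [this]
    exact MeasurableSet.iInter fun i => MeasurableSet.iInter fun _ =>
      measurable_pi_apply i (measurableSet_singleton _)

theorem stmt_9 {S O : Type} [Fintype S] [Nonempty S] [Fintype O] [DecidableEq S]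
    [MeasurableSpace S] [DiscreteMeasurableSpace S]
    (δ : S → Fin 2 → PMF S) (obs : S → O)
    (L R : S → Fin 2 → S) (p : S → Fin 2 → ℝ)
    (hp : ∀ s a, p s a ∈ Set.Icc (0 : ℝ) 1)
    -- binary branching: `δ s a = p s a · Dirac (L s a) + (1 − p s a) · Dirac (R s a)`
    (hbr : ∀ s a t, δ s a t =
      (if t = L s a then ENNReal.ofReal (p s a) else 0) +
        (if t = R s a then ENNReal.ofReal (1 - p s a) else 0))
    (sStar : S) (σ : List S → PMF (Fin 2))
    (ν : Measure (ℕ → ℝ)) (hν : IsCubeMeasure ν)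
    (μ : Measure (ℕ → S × Fin 2)) (hμ : IsSALaw δ σ sStar μ) :
    Measurable (fun q : (ℕ → ℝ) × (ℕ → ℝ) => playMap σ L R p sStar q.1 q.2) ∧
    Measure.map (fun q : (ℕ → ℝ) × (ℕ → ℝ) => playMap σ L R p sStar q.1 q.2) (ν.prod ν) =
      μ := by
  obtain ⟨hP, hc⟩ := hμ
  have hPν := hν.1
  set f := fun q : (ℕ → ℝ) × (ℕ → ℝ) => playMap σ L R p sStar q.1 q.2 with hf
  have hA : ∀ ρ : ℕ → S × Fin 2, ∀ i, MeasurableSet {z | act σ (Hs ρ i) z = (ρ i).2} :=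
    fun ρ i => act_meas σ (Hs ρ i) (measurableSet_singleton _)
  have hB : ∀ ρ : ℕ → S × Fin 2, ∀ i,
      MeasurableSet {z | stp L R p (ρ i) z = (ρ (i + 1)).1} :=
    fun ρ i => stp_meas L R p (ρ i) (measurableSet_singleton _)
  have hpre : ∀ n ρ, f ⁻¹' FC n ρ = if (ρ 0).1 = sStar then
      {x | ∀ i < n + 1, x i ∈ {z | act σ (Hs ρ i) z = (ρ i).2}} ×ˢ
      {y | ∀ i < n, y i ∈ {z | stp L R p (ρ i) z = (ρ (i + 1)).1}} else ∅ := by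
    intro n ρ
    ext ⟨x, y⟩
    have := play_iff σ L R p sStar x y ρ n
    by_cases h : (ρ 0).1 = sStar
    · rw [if_pos h]
      simp only [h, true_and] at this
      exact this
    · rw [if_neg h]
      simp only [h, false_and] at this
      exact this
  have hmeas : Measurable f := by
    rw [FC_gen (α := S × Fin 2)]
    refine measurable_generateFrom ?_
    rintro _ ⟨n, ρ, rfl⟩
    rw [hpre]
    split_ifs
    · exact (cube_meas _ _ (hA ρ)).prod (cube_meas _ _ (hB ρ))
    · exact MeasurableSet.empty
  refine ⟨hmeas, ?_⟩
  have hPm : IsProbabilityMeasure ((ν.prod ν).map f) :=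
    Measure.isProbabilityMeasure_map hmeas.aemeasurable
  refine ext_of_generate_finite _ FC_gen FC_pi ?_ (by simp)
  rintro _ ⟨n, ρ, rfl⟩
  have hFC : MeasurableSet (FC n ρ) := by
    rw [FC_gen]; exact MeasurableSpace.measurableSet_generateFrom ⟨n, ρ, rfl⟩
  rw [Measure.map_apply hmeas hFC, hpre, FC_eq_Cyl, hc]
  simp only [saProb_eq, List.nil_append]
  by_cases h : (ρ 0).1 = sStar
  · rw [if_pos h, if_pos h, Measure.prod_prod, cube_box ν hν _ _ (hA ρ), cube_box ν hν _ _ (hB ρ)]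
    simp only [lam_act, lam_stp L R p hp, ← hbr]
    rw [Finset.prod_range_succ', Finset.prod_mul_distrib]
    have : Hs ρ 0 = [(ρ 0).1] := by simp [Hs]
    rw [this]
    ring
  · rw [if_neg h, if_neg h]; simp

end Stmt9
end
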